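/- arXiv:2502.00958 — 9 statements merged into one kernel-verified Lean document; each statement's English description precedes it below -/
import Mathlib

section
/- Let n ≥ 2, let μ ∈ Δ_n have full support, let σ : [0,∞) → ℝ be strictly concave and differentiable with σ(1) = 0, let E be a nonempty proper subset of {1,…,n}, and let α ∈ [0,1]. Then the unique minimizer of the Bayesian divergence d_μ(π) = −Σ_{i=1}^n μ_i σ(π_i/μ_i) over the set {π ∈ Δ_n : π(E) = α} is the vector π* given by π*_i = α·μ_i/μ(E) for i ∈ E and π*_i = (1−α)·μ_i/μ(E^c) for i ∉ E. -/
open Finset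

/-!
Split the sum defining `d_μ` over the two cells `E` and `Eᶜ`, whose `π`-masses `α` and `1 - α` are
prescribed. On each cell `S`, Jensen's inequality with weights `μ` bounds `∑ μ_i σ(π_i / μ_i)` above
by `μ(S) σ(π(S) / μ(S))`, and by strict concavity equality holds only if `π_i / μ_i` is constant on
`S`, that is, if the mass of `S` is distributed proportionally to `μ`.
-/

section Jensen

variable {𝕜 F β ι : Type*} [Field 𝕜] [LinearOrder 𝕜] [IsStrictOrderedRing 𝕜]
  [AddCommGroup F] [AddCommGroup β] [PartialOrder β] [IsOrderedAddMonoid β] [Module 𝕜 F]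
  [Module 𝕜 β] [IsStrictOrderedModule 𝕜 β]

theorem map_centerMass_eq_iff {s : Set F} {f : F → β} {t : Finset ι} {w : ι → 𝕜} {z : ι → F}
    (hf : StrictConcaveOn 𝕜 s f) (ht : t.Nonempty) (hw : ∀ i ∈ t, 0 < w i)
    (hz : ∀ i ∈ t, z i ∈ s) :
    f (t.centerMass w z) = t.centerMass w (f ∘ z) ↔ ∀ i ∈ t, z i = t.centerMass w z := by
  have hW : 0 < ∑ i ∈ t, w i := sum_pos hw ht
  have hsum : ∑ i ∈ t, ((∑ j ∈ t, w j)⁻¹ • w) i = 1 := by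
    simp only [Pi.smul_apply, smul_eq_mul, ← mul_sum, inv_mul_cancel₀ hW.ne']
  have hpos : ∀ i ∈ t, 0 < ((∑ j ∈ t, w j)⁻¹ • w) i := fun i hi ↦
    mul_pos (inv_pos.2 hW) (hw i hi)
  rw [← centerMass_smul_left t (inv_ne_zero hW.ne') (w := w) (z := z),
    ← centerMass_smul_left t (inv_ne_zero hW.ne') (w := w) (z := f ∘ z),
    centerMass_eq_of_sum_1 _ _ hsum, centerMass_eq_of_sum_1 _ _ hsum]
  exact hf.map_sum_eq_iff hpos hsum hz

end Jensen

section ProportionalShare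

variable {𝕜 ι : Type*} [Field 𝕜] {μ p : ι → 𝕜} {σ : 𝕜 → 𝕜} {S : Finset ι}

/-- The density on the cell `S` obtained by distributing a total mass `a` over `S` proportionally to
the weights `μ`. It is defined by the same formula outside `S`, where its values are not used. -/
def proportionalShare (μ : ι → 𝕜) (S : Finset ι) (a : 𝕜) (i : ι) : 𝕜 :=
  a * μ i / ∑ j ∈ S, μ j

theorem sum_proportionalShare (hS : ∑ i ∈ S, μ i ≠ 0) (a : 𝕜) :
    ∑ i ∈ S, proportionalShare μ S a i = a := by
  simp only [proportionalShare, ← sum_div, ← mul_sum, mul_div_cancel_right₀ a hS]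

theorem proportionalShare_div {i : ι} (hi : μ i ≠ 0) (S : Finset ι) (a : 𝕜) :
    proportionalShare μ S a i / μ i = a / ∑ j ∈ S, μ j := by
  rw [proportionalShare, div_right_comm, mul_div_cancel_right₀ a hi]

theorem sum_mul_map_proportionalShare_div (hμ : ∀ i ∈ S, μ i ≠ 0) (a : 𝕜) :
    ∑ i ∈ S, μ i * σ (proportionalShare μ S a i / μ i) =
      (∑ i ∈ S, μ i) * σ (a / ∑ i ∈ S, μ i) := by
  rw [sum_mul]
  exact sum_congr rfl fun i hi ↦ by rw [proportionalShare_div (hμ i hi)]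

theorem centerMass_div (hμ : ∀ i ∈ S, μ i ≠ 0) :
    S.centerMass μ (fun i ↦ p i / μ i) = (∑ i ∈ S, p i) / ∑ i ∈ S, μ i := by
  rw [centerMass, smul_eq_mul, inv_mul_eq_div]
  congr 1
  exact sum_congr rfl fun i hi ↦ mul_div_cancel₀ (p i) (hμ i hi)

variable [LinearOrder 𝕜] [IsStrictOrderedRing 𝕜] {s : Set 𝕜}

theorem proportionalShare_nonneg {i : ι} {a : 𝕜} (hi : 0 ≤ μ i) (hS : 0 ≤ ∑ j ∈ S, μ j)
    (ha : 0 ≤ a) : 0 ≤ proportionalShare μ S a i :=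
  div_nonneg (mul_nonneg ha hi) hS

theorem sum_mul_map_div_le (hσ : ConcaveOn 𝕜 s σ) (hS : S.Nonempty) (hμ : ∀ i ∈ S, 0 < μ i)
    (hp : ∀ i ∈ S, p i / μ i ∈ s) :
    ∑ i ∈ S, μ i * σ (p i / μ i) ≤ (∑ i ∈ S, μ i) * σ ((∑ i ∈ S, p i) / ∑ i ∈ S, μ i) := by
  have hM : 0 < ∑ i ∈ S, μ i := sum_pos hμ hS
  have jensen := hσ.le_map_centerMass (fun i hi ↦ (hμ i hi).le) hM hp
  rw [centerMass_div fun i hi ↦ (hμ i hi).ne'] at jensen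
  exact (inv_mul_le_iff₀ hM).1 jensen

theorem sum_mul_map_div_eq_iff (hσ : StrictConcaveOn 𝕜 s σ) (hS : S.Nonempty)
    (hμ : ∀ i ∈ S, 0 < μ i) (hp : ∀ i ∈ S, p i / μ i ∈ s) :
    ∑ i ∈ S, μ i * σ (p i / μ i) = (∑ i ∈ S, μ i) * σ ((∑ i ∈ S, p i) / ∑ i ∈ S, μ i) ↔
      ∀ i ∈ S, p i = proportionalShare μ S (∑ j ∈ S, p j) i := by
  have hM : 0 < ∑ i ∈ S, μ i := sum_pos hμ hS
  have jensen := map_centerMass_eq_iff hσ hS hμ hp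
  rw [centerMass_div fun i hi ↦ (hμ i hi).ne', eq_comm] at jensen
  refine (inv_mul_eq_iff_eq_mul₀ hM.ne').symm.trans (jensen.trans (forall₂_congr fun i hi ↦ ?_))
  rw [div_eq_iff (hμ i hi).ne', proportionalShare, div_mul_eq_mul_div]

end ProportionalShare

section BayesianDivergence

variable {𝕜 ι : Type*} [Field 𝕜] [Fintype ι] {μ : ι → 𝕜} {σ : 𝕜 → 𝕜} {E : Finset ι} {α : 𝕜}

/-- The Bayesian divergence `d_μ(π) = -∑ μ_i σ(π_i / μ_i)` generated by `σ`. The prior `μ` is not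
required to be normalized. -/
def bayesianDivergence (μ : ι → 𝕜) (σ : 𝕜 → 𝕜) (π : ι → 𝕜) : 𝕜 :=
  -∑ i, μ i * σ (π i / μ i)

/-- The `α`-event of `E`: the probability vectors `π` with `π(E) = α`, over which the divergence
is minimized. -/
def alphaEvent [PartialOrder 𝕜] (E : Finset ι) (α : 𝕜) : Set (ι → 𝕜) :=
  {π ∈ stdSimplex 𝕜 ι | ∑ i ∈ E, π i = α}

variable [DecidableEq ι]

theorem sum_compl_of_mem_alphaEvent [PartialOrder 𝕜] {π : ι → 𝕜}
    (hπ : π ∈ alphaEvent E α) : ∑ i ∈ Eᶜ, π i = 1 - α := by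
  rw [eq_sub_iff_add_eq', ← hπ.2, sum_add_sum_compl, hπ.1.2]

/-- The extended Bayesian posterior of the prior `μ`: mass `α` on `E` and mass `1 - α` on `Eᶜ`, each
distributed proportionally to `μ`. -/
def extendedPosterior (μ : ι → 𝕜) (E : Finset ι) (α : 𝕜) (i : ι) : 𝕜 :=
  if i ∈ E then proportionalShare μ E α i else proportionalShare μ Eᶜ (1 - α) i

theorem extendedPosterior_of_mem {i : ι} (hi : i ∈ E) :
    extendedPosterior μ E α i = proportionalShare μ E α i :=
  if_pos hi

theorem extendedPosterior_of_mem_compl {i : ι} (hi : i ∈ Eᶜ) :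
    extendedPosterior μ E α i = proportionalShare μ Eᶜ (1 - α) i :=
  if_neg (mem_compl.1 hi)

theorem bayesianDivergence_eq_add_compl (μ : ι → 𝕜) (σ : 𝕜 → 𝕜) (E : Finset ι) (π : ι → 𝕜) :
    bayesianDivergence μ σ π =
      -(∑ i ∈ E, μ i * σ (π i / μ i) + ∑ i ∈ Eᶜ, μ i * σ (π i / μ i)) := by
  rw [bayesianDivergence, sum_add_sum_compl]

theorem bayesianDivergence_extendedPosterior (hμ : ∀ i, μ i ≠ 0) :
    bayesianDivergence μ σ (extendedPosterior μ E α) =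
      -((∑ i ∈ E, μ i) * σ (α / ∑ i ∈ E, μ i) +
        (∑ i ∈ Eᶜ, μ i) * σ ((1 - α) / ∑ i ∈ Eᶜ, μ i)) := by
  rw [bayesianDivergence_eq_add_compl μ σ E,
    ← sum_mul_map_proportionalShare_div (fun i _ ↦ hμ i) α,
    ← sum_mul_map_proportionalShare_div (fun i _ ↦ hμ i) (1 - α)]
  congr 2
  · exact sum_congr rfl fun i hi ↦ by rw [extendedPosterior_of_mem hi]
  · exact sum_congr rfl fun i hi ↦ by rw [extendedPosterior_of_mem_compl hi]

variable [LinearOrder 𝕜] [IsStrictOrderedRing 𝕜]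

theorem extendedPosterior_mem_alphaEvent (hμ : ∀ i, 0 < μ i) (hE : E.Nonempty)
    (hEc : Eᶜ.Nonempty) (hα : α ∈ Set.Icc 0 1) : extendedPosterior μ E α ∈ alphaEvent E α := by
  have hM : 0 < ∑ i ∈ E, μ i := sum_pos (fun i _ ↦ hμ i) hE
  have hMc : 0 < ∑ i ∈ Eᶜ, μ i := sum_pos (fun i _ ↦ hμ i) hEc
  have mass : ∑ i ∈ E, extendedPosterior μ E α i = α := by
    rw [sum_congr rfl fun i ↦ extendedPosterior_of_mem, sum_proportionalShare hM.ne']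
  have mass_compl : ∑ i ∈ Eᶜ, extendedPosterior μ E α i = 1 - α := by
    rw [sum_congr rfl fun i ↦ extendedPosterior_of_mem_compl, sum_proportionalShare hMc.ne']
  refine ⟨⟨fun i ↦ ?_, ?_⟩, mass⟩
  · unfold extendedPosterior
    split_ifs
    · exact proportionalShare_nonneg (hμ i).le hM.le hα.1
    · exact proportionalShare_nonneg (hμ i).le hMc.le (sub_nonneg.2 hα.2)
  · rw [← sum_add_sum_compl E, mass, mass_compl, add_sub_cancel]

theorem bayesianDivergence_extendedPosterior_lt (hμ : ∀ i, 0 < μ i)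
    (hσ : StrictConcaveOn 𝕜 (Set.Ici 0) σ) (hE : E.Nonempty) (hEc : Eᶜ.Nonempty) {π : ι → 𝕜}
    (hπ : π ∈ alphaEvent E α) (hne : π ≠ extendedPosterior μ E α) :
    bayesianDivergence μ σ (extendedPosterior μ E α) < bayesianDivergence μ σ π := by
  have ratio_mem (i : ι) : π i / μ i ∈ Set.Ici 0 := div_nonneg (hπ.1.1 i) (hμ i).le
  have le_cell {S : Finset ι} (hS : S.Nonempty) :=
    sum_mul_map_div_le hσ.concaveOn hS (fun i _ ↦ hμ i) fun i _ ↦ ratio_mem i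
  have eq_cell_iff {S : Finset ι} (hS : S.Nonempty) :=
    sum_mul_map_div_eq_iff hσ hS (fun i _ ↦ hμ i) fun i _ ↦ ratio_mem i
  rw [bayesianDivergence_extendedPosterior fun i ↦ (hμ i).ne',
    bayesianDivergence_eq_add_compl μ σ E, neg_lt_neg_iff, ← sum_compl_of_mem_alphaEvent hπ, ← hπ.2]
  refine (add_le_add (le_cell hE) (le_cell hEc)).lt_of_ne fun heq ↦ hne (funext fun i ↦ ?_)
  obtain ⟨heqE, heqEc⟩ := (add_eq_add_iff_eq_and_eq (le_cell hE) (le_cell hEc)).1 heq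
  by_cases hi : i ∈ E
  · rw [extendedPosterior_of_mem hi, ← hπ.2]
    exact (eq_cell_iff hE).1 heqE i hi
  · rw [extendedPosterior_of_mem_compl (mem_compl.2 hi), ← sum_compl_of_mem_alphaEvent hπ]
    exact (eq_cell_iff hEc).1 heqEc i (mem_compl.2 hi)

theorem stmt0_general (hμ : ∀ i, 0 < μ i) (hσ : StrictConcaveOn 𝕜 (Set.Ici 0) σ)
    (hE : E.Nonempty) (hEne : E ≠ univ) (hα : α ∈ Set.Icc 0 1) :
    extendedPosterior μ E α ∈ alphaEvent E α ∧
      ∀ π ∈ alphaEvent E α, π ≠ extendedPosterior μ E α →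
        bayesianDivergence μ σ (extendedPosterior μ E α) < bayesianDivergence μ σ π := by
  have hEc : Eᶜ.Nonempty := by rwa [nonempty_iff_ne_empty, Ne, compl_eq_empty_iff]
  exact ⟨extendedPosterior_mem_alphaEvent hμ hE hEc hα,
    fun π ↦ bayesianDivergence_extendedPosterior_lt hμ hσ hE hEc⟩

end BayesianDivergence

/-- For a full-support prior `μ` on a simplex `Δ_n` and a Bayesian divergence
`d_μ(π) = −Σ μ_i σ(π_i/μ_i)`, the unique minimizer over the α-event
`{π ∈ Δ_n : π(E) = α}` is the proportional (extended Bayesian) posterior. -/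
theorem stmt0 (n : ℕ) (hn : 2 ≤ n) (μ : Fin n → ℝ)
    (hμpos : ∀ i, 0 < μ i) (hμsum : ∑ i, μ i = 1)
    (σ : ℝ → ℝ) (hσconc : StrictConcaveOn ℝ (Set.Ici (0 : ℝ)) σ)
    (hσdiff : DifferentiableOn ℝ σ (Set.Ici (0 : ℝ))) (hσ1 : σ 1 = 0)
    (E : Finset (Fin n)) (hE : E.Nonempty) (hEne : E ≠ Finset.univ)
    (α : ℝ) (hα : α ∈ Set.Icc (0 : ℝ) 1)
    (d : (Fin n → ℝ) → ℝ) (hd : ∀ π, d π = -∑ i, μ i * σ (π i / μ i))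
    (C : Set (Fin n → ℝ))
    (hC : C = {π | (∀ i, 0 ≤ π i) ∧ (∑ i, π i = 1) ∧ ∑ i ∈ E, π i = α})
    (πstar : Fin n → ℝ)
    (hπstar : ∀ i, πstar i = if i ∈ E then α * μ i / (∑ j ∈ E, μ j)
      else (1 - α) * μ i / (∑ j ∈ Eᶜ, μ j)) :
    πstar ∈ C ∧ ∀ π ∈ C, π ≠ πstar → d πstar < d π := by
  obtain rfl : d = bayesianDivergence μ σ := funext hd
  obtain rfl : πstar = extendedPosterior μ E α := funext hπstar
  obtain rfl : C = alphaEvent E α := hC.trans (Set.ext fun _ ↦ and_assoc.symm)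
  exact stmt0_general hμpos hσconc hE hEne hα
end

section
/- Let S be a finite set with |S| ≥ 2, let μ be a full-support probability distribution on S, let 𝓘 be a finite set, let ρ : 𝓘 → Δ(S) be an updating rule, and let e be an injective map assigning to each nonempty subset E of S an element e(E) ∈ 𝓘. Suppose ρ is minimally responsive: for every nonempty E ⊆ S, ρ(e(E))(s) ≥ μ(s) for all s ∈ E and ρ(e(E))(s) < μ(s) for all s ∉ E. Then ρ has a Bayesian representation: there exists P : S → Δ(𝓘) such that for every I ∈ 𝓘, Σ_{s'∈S} P(I|s')μ(s') > 0 and ρ(I)(s) = P(I|s)μ(s) / Σ_{s'∈S} P(I|s')μ(s') for every s ∈ S. -/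
open Finset

/-!
Bayes' rule represents `ρ` as soon as the prior is an average `μ = ∑ I, w I • ρ I` of the posteriors
with positive weights: take `P s I = w I * ρ I s / μ s`. By Stiemke's lemma such weights exist
unless some `a : S → ℝ` has `∑ s, (ρ I s - μ s) * a s ≥ 0` for all `I`, with strict inequality for
some `I`. Let `s₀` minimise `a`. The signal `e {s₀}` lowers the probability of every other state, so
it shifts mass towards the minimum of `a`. The expectation of `a` therefore drops unless `a` is
constant, and for constant `a` none of the inequalities is strict.
-/

open Matrix

section Stiemke

variable {ι σ : Type*} [Fintype ι] [Fintype σ]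

lemma map_eq_zero_of_forall_mem_lt {R E : Type*} [Field R] [Preorder R] [AddCommGroup E]
    [Module R E] {V : Submodule R E} {f : E →ₗ[R] R} {u : R} (hf : ∀ v ∈ V, f v < u) {v : E}
    (hv : v ∈ V) : f v = 0 := by
  by_contra hfv
  have hlt := hf ((u / f v) • v) (V.smul_mem _ hv)
  rw [map_smul, smul_eq_mul, div_mul_cancel₀ u hfv] at hlt
  exact hlt.false

lemma exists_pos_forall_mem_dotProduct_eq_zero {V : Submodule ℝ (ι → ℝ)}
    (hV : ∀ v ∈ V, 0 ≤ v → v = 0) :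
    ∃ w : ι → ℝ, (∀ i, 0 < w i) ∧ ∀ v ∈ V, w ⬝ᵥ v = 0 := by
  classical
  have hdisj : Disjoint (V : Set (ι → ℝ)) (stdSimplex ℝ ι) := by
    refine Set.disjoint_left.mpr fun v hvV hv => ?_
    have hsum := hv.2
    simp [hV v hvV hv.1] at hsum
  obtain ⟨f, u, c, hfV, huc, hfΔ⟩ := geometric_hahn_banach_closed_compact V.convex
    V.closed_of_finiteDimensional (convex_stdSimplex ℝ ι) (isCompact_stdSimplex ℝ ι) hdisj
  have hu : 0 < u := by simpa using hfV 0 V.zero_mem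
  refine ⟨fun i => f (Pi.single i 1), fun i => ?_, fun v hv => ?_⟩
  · exact hu.trans (huc.trans (hfΔ _ (single_mem_stdSimplex ℝ i)))
  · calc (fun i => f (Pi.single i 1)) ⬝ᵥ v = f v := by
          conv_rhs => rw [pi_eq_sum_univ' v, map_sum]
          simp only [dotProduct, map_smul, smul_eq_mul, mul_comm]
      _ = 0 := map_eq_zero_of_forall_mem_lt (f := f.toLinearMap) hfV hv

/-- Stiemke's lemma. -/
lemma exists_pos_vecMul_eq_zero {A : Matrix ι σ ℝ} (hA : ∀ a, 0 ≤ A *ᵥ a → A *ᵥ a = 0) :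
    ∃ w : ι → ℝ, (∀ i, 0 < w i) ∧ w ᵥ* A = 0 := by
  obtain ⟨w, hw, hwA⟩ :=
    exists_pos_forall_mem_dotProduct_eq_zero (V := LinearMap.range A.mulVecLin)
      (by rintro _ ⟨a, rfl⟩; exact hA a)
  refine ⟨w, hw, dotProduct_eq_zero _ fun a => ?_⟩
  rw [← dotProduct_mulVec]
  exact hwA _ ⟨a, rfl⟩

end Stiemke

section ZeroSum

variable {ι σ : Type*} [Fintype σ]

lemma eq_of_dotProduct_nonneg_of_forall_ne_neg {R : Type*} [Ring R] [LinearOrder R]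
    [IsStrictOrderedRing R] {d a : σ → R} {s₀ : σ} (hs₀ : ∀ s, a s₀ ≤ a s) (hd : ∑ s, d s = 0)
    (hneg : ∀ s ≠ s₀, d s < 0) (hda : 0 ≤ d ⬝ᵥ a) (s : σ) : a s = a s₀ := by
  have hterm : ∀ t ∈ univ, d t * (a t - a s₀) ≤ 0 := fun t _ => by
    rcases eq_or_ne t s₀ with rfl | ht
    · simp
    · exact mul_nonpos_of_nonpos_of_nonneg (hneg t ht).le (sub_nonneg.mpr (hs₀ t))
  have hshift : ∑ t, d t * (a t - a s₀) = d ⬝ᵥ a := by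
    simp only [mul_sub, sum_sub_distrib, ← sum_mul, hd, zero_mul, sub_zero, dotProduct]
  have hzero : d s * (a s - a s₀) = 0 :=
    (sum_eq_zero_iff_of_nonpos hterm).mp ((sum_nonpos hterm).antisymm (hshift ▸ hda)) s (mem_univ s)
  rcases eq_or_ne s s₀ with rfl | hs
  · rfl
  · exact sub_eq_zero.mp ((mul_eq_zero.mp hzero).resolve_left (hneg s hs).ne)

lemma exists_pos_vecMul_eq_zero_of_forall_ne_neg [Fintype ι] {A : Matrix ι σ ℝ}
    (hsum : ∀ i, ∑ s, A i s = 0) (hneg : ∀ s, ∃ i, ∀ t ≠ s, A i t < 0) :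
    ∃ w : ι → ℝ, (∀ i, 0 < w i) ∧ w ᵥ* A = 0 := by
  refine exists_pos_vecMul_eq_zero fun a ha => ?_
  ext i
  cases isEmpty_or_nonempty σ
  · simp [mulVec, dotProduct]
  obtain ⟨s₀, hs₀⟩ := Finite.exists_min a
  obtain ⟨j, hj⟩ := hneg s₀
  have hconst := eq_of_dotProduct_nonneg_of_forall_ne_neg hs₀ (hsum j) hj (ha j)
  simp only [mulVec, dotProduct, hconst, ← sum_mul, hsum, zero_mul, Pi.zero_apply]

end ZeroSum

section Bayes

variable {S 𝓘 : Type*} [Fintype S] [Fintype 𝓘]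

/-- The updating rule `ρ` arises from the prior `μ` by Bayes' rule: there are signal distributions
`P s`, one for each state `s`, under which every signal `I` has positive probability and `ρ I` is
the posterior given `I`. -/
def HasBayesianRepresentation {R : Type*} [Field R] [LinearOrder R] (μ : S → R) (ρ : 𝓘 → S → R) :
    Prop :=
  ∃ P : S → 𝓘 → R,
    (∀ s, (∀ I, 0 ≤ P s I) ∧ ∑ I, P s I = 1) ∧
    ∀ I, (0 < ∑ s', P s' I * μ s') ∧ ∀ s, ρ I s = P s I * μ s / ∑ s', P s' I * μ s'

lemma hasBayesianRepresentation_of_sum_mul_eq {R : Type*} [Field R] [LinearOrder R]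
    [IsStrictOrderedRing R] {μ : S → R} {ρ : 𝓘 → S → R} {w : 𝓘 → R} (hμ : ∀ s, 0 < μ s)
    (hρ : ∀ I, (∀ s, 0 ≤ ρ I s) ∧ ∑ s, ρ I s = 1) (hw : ∀ I, 0 < w I)
    (hwρ : ∀ s, ∑ I, w I * ρ I s = μ s) : HasBayesianRepresentation μ ρ := by
  have hjoint (I : 𝓘) (s : S) : w I * ρ I s / μ s * μ s = w I * ρ I s :=
    div_mul_cancel₀ _ (hμ s).ne'
  have hmarginal (I : 𝓘) : ∑ s, w I * ρ I s / μ s * μ s = w I := by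
    simp only [hjoint, ← mul_sum, (hρ I).2, mul_one]
  refine ⟨fun s I => w I * ρ I s / μ s, fun s => ⟨fun I => ?_, ?_⟩, fun I => ⟨?_, fun s => ?_⟩⟩
  · exact div_nonneg (mul_nonneg (hw I).le ((hρ I).1 s)) (hμ s).le
  · rw [← sum_div, hwρ, div_self (hμ s).ne']
  · rw [hmarginal]
    exact hw I
  · rw [hmarginal, hjoint, mul_div_cancel_left₀ _ (hw I).ne']

lemma exists_pos_sum_mul_eq_of_forall_ne_lt {μ : S → ℝ} {ρ : 𝓘 → S → ℝ} (hμ : ∑ s, μ s = 1)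
    (hρ : ∀ I, ∑ s, ρ I s = 1) (hlt : ∀ s, ∃ I, ∀ t ≠ s, ρ I t < μ t) :
    ∃ w : 𝓘 → ℝ, (∀ I, 0 < w I) ∧ ∀ s, ∑ I, w I * ρ I s = μ s := by
  obtain ⟨w, hw, hwA⟩ := exists_pos_vecMul_eq_zero_of_forall_ne_neg
    (A := of fun I s => ρ I s - μ s)
    (fun I => by simp only [of_apply, sum_sub_distrib, hρ, hμ, sub_self])
    (fun s => (hlt s).imp fun I hI t ht => sub_neg.mpr (hI t ht))
  have hbalance (s : S) : ∑ I, w I * ρ I s = (∑ I, w I) * μ s := by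
    have hs : ∑ I, w I * (ρ I s - μ s) = 0 := congrFun hwA s
    simpa only [mul_sub, sum_sub_distrib, ← sum_mul, sub_eq_zero] using hs
  obtain ⟨s, -, -⟩ := exists_ne_zero_of_sum_ne_zero (hμ.trans_ne one_ne_zero)
  have htotal : 0 < ∑ I, w I := sum_pos (fun I _ => hw I) ⟨(hlt s).choose, mem_univ _⟩
  refine ⟨fun I => w I / ∑ J, w J, fun I => div_pos (hw I) htotal, fun t => ?_⟩
  simp only [div_mul_eq_mul_div, ← sum_div, hbalance, mul_div_cancel_left₀ _ htotal.ne']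

theorem stmt2_general {μ : S → ℝ} (hμpos : ∀ s, 0 < μ s) (hμsum : ∑ s, μ s = 1) {ρ : 𝓘 → S → ℝ}
    (hρ : ∀ I, (∀ s, 0 ≤ ρ I s) ∧ ∑ s, ρ I s = 1)
    (hresp : ∀ s, ∃ I, ∀ t ≠ s, ρ I t < μ t) : HasBayesianRepresentation μ ρ := by
  obtain ⟨w, hw, hwρ⟩ := exists_pos_sum_mul_eq_of_forall_ne_lt hμsum (fun I => (hρ I).2) hresp
  exact hasBayesianRepresentation_of_sum_mul_eq hμpos hρ hw hwρ

end Bayes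

/-- any minimally responsive updating rule admits a Bayesian representation. -/
theorem stmt2 {S 𝓘 : Type*} [Fintype S] [Fintype 𝓘] [DecidableEq S]
    (hS : 2 ≤ Fintype.card S)
    (μ : S → ℝ) (hμpos : ∀ s, 0 < μ s) (hμsum : ∑ s, μ s = 1)
    (ρ : 𝓘 → S → ℝ)
    (hρ : ∀ I : 𝓘, (∀ s, 0 ≤ ρ I s) ∧ ∑ s, ρ I s = 1)
    (e : {E : Finset S // E.Nonempty} → 𝓘) (he : Function.Injective e)
    (hresp : ∀ E : {E : Finset S // E.Nonempty},
      (∀ s ∈ E.1, μ s ≤ ρ (e E) s) ∧ (∀ s ∉ E.1, ρ (e E) s < μ s)) :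
    ∃ P : S → 𝓘 → ℝ,
      (∀ s, (∀ I : 𝓘, 0 ≤ P s I) ∧ ∑ I : 𝓘, P s I = 1) ∧
      ∀ I : 𝓘, (0 < ∑ s' : S, P s' I * μ s') ∧
        ∀ s, ρ I s = P s I * μ s / ∑ s' : S, P s' I * μ s' :=
  stmt2_general hμpos hμsum hρ fun s =>
    ⟨e ⟨{s}, singleton_nonempty s⟩, fun t ht => (hresp _).2 t (notMem_singleton.mpr ht)⟩
end

section
/- Let n ≥ 2 and μ ∈ Δ_n, and let d, d' : Δ_n → ℝ both be distance functions with respect to μ that are locally nonsatiated with respect to μ and weakly continuous. Suppose that for all π, π' ∈ Δ_n: d(π) > d(π') implies d'(π) ≥ d'(π'), and d'(π) > d'(π') implies d(π) ≥ d(π'). Then for all π, π' ∈ Δ_n: d(π) > d(π') if and only if d'(π) > d'(π'). -/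
open Finset

section Topological

open Topology

variable {X α β : Type*} [TopologicalSpace X] [Preorder α] [Preorder β]
  {f : X → α} {g : X → β} {s : Set X} {μ : X}

/-- Weak continuity of `f` on `s`: the strict upper contour sets of `f` are relatively open in `s`.
Only thresholds attained on `s` are considered, so this is weaker than `LowerSemicontinuousOn`. -/
def WeaklyContinuousOn (f : X → α) (s : Set X) : Prop :=
  ∀ x ∈ s, ∀ y ∈ s, f x < f y → ∀ᶠ z in 𝓝[s] y, f x < f z

/-- Local nonsatiation of `f` on `s` with respect to `μ`: every point of `s` other than `μ` can be
improved upon, in the sense of a strictly smaller value of `f`, arbitrarily close by in `s`. -/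
def LocallyNonsatiatedOn (f : X → α) (s : Set X) (μ : X) : Prop :=
  ∀ x ∈ s, x ≠ μ → ∃ᶠ y in 𝓝[s] x, f y < f x

theorem WeaklyContinuousOn.lt_of_lt (hf : WeaklyContinuousOn f s)
    (hg : LocallyNonsatiatedOn g s μ) (hmin : IsMinOn f s μ)
    (hfg : ∀ x ∈ s, ∀ y ∈ s, f y < f x → g y ≤ g x)
    {x y : X} (hx : x ∈ s) (hy : y ∈ s) (hxy : f y < f x) : g y < g x := by
  have hxμ : x ≠ μ := by
    rintro rfl
    exact (hmin hy).not_gt hxy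
  obtain ⟨z, hzx, hyz, hz⟩ := ((hg x hx hxμ).and_eventually
    ((hf y hy x hx hxy).and self_mem_nhdsWithin)).exists
  exact (hfg z hz y hy hyz).trans_lt hzx

theorem stmt5_general
    (hf_wc : WeaklyContinuousOn f s) (hg_wc : WeaklyContinuousOn g s)
    (hf_lns : LocallyNonsatiatedOn f s μ) (hg_lns : LocallyNonsatiatedOn g s μ)
    (hf_min : IsMinOn f s μ) (hg_min : IsMinOn g s μ)
    (hfg : ∀ x ∈ s, ∀ y ∈ s, f y < f x → g y ≤ g x)
    (hgf : ∀ x ∈ s, ∀ y ∈ s, g y < g x → f y ≤ f x) :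
    ∀ x ∈ s, ∀ y ∈ s, (f y < f x ↔ g y < g x) := fun _ hx _ hy ↦
  ⟨hf_wc.lt_of_lt hg_lns hf_min hfg hx hy, hg_wc.lt_of_lt hf_lns hg_min hgf hx hy⟩

end Topological

section Normed

variable {E α : Type*} [SeminormedAddCommGroup E] [Preorder α] {f : E → α} {s : Set E} {μ : E}

theorem weaklyContinuousOn_iff_norm :
    WeaklyContinuousOn f s ↔ ∀ x ∈ s, ∀ y ∈ s, f x < f y →
      ∃ ε > (0 : ℝ), ∀ z ∈ s, ‖y - z‖ < ε → f x < f z := by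
  simp only [WeaklyContinuousOn, Metric.nhdsWithin_basis_ball.eventually_iff, Set.mem_inter_iff,
    Metric.mem_ball', dist_eq_norm, and_imp, imp.swap (b := _ ∈ s)]

theorem locallyNonsatiatedOn_iff_norm :
    LocallyNonsatiatedOn f s μ ↔ ∀ x ∈ s, x ≠ μ → ∀ ε > (0 : ℝ),
      ∃ y ∈ s, ‖x - y‖ < ε ∧ f y < f x := by
  simp only [LocallyNonsatiatedOn, Metric.nhdsWithin_basis_ball.frequently_iff, Set.mem_inter_iff,
    Metric.mem_ball', dist_eq_norm, and_assoc, and_left_comm]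

end Normed

theorem isMinOn_of_forall_ne_lt {X α : Type*} [Preorder α] {f : X → α} {s : Set X} {μ : X}
    (h : ∀ x ∈ s, x ≠ μ → f μ < f x) : IsMinOn f s μ := fun x hx ↦ by
  obtain rfl | hxμ := eq_or_ne x μ
  exacts [le_rfl, (h x hx hxμ).le]

/-- two locally nonsatiated, weakly continuous distance functions w.r.t. `μ`
satisfying the mutual weak-monotonicity conditions are ordinally equivalent. -/
theorem stmt5 (n : ℕ) (hn : 2 ≤ n)
    (Δ : Set (EuclideanSpace ℝ (Fin n)))
    (hΔ : Δ = {π : EuclideanSpace ℝ (Fin n) | (∀ i, 0 ≤ π i) ∧ ∑ i, π i = 1})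
    (μ : EuclideanSpace ℝ (Fin n)) (hμ : μ ∈ Δ)
    (d d' : EuclideanSpace ℝ (Fin n) → ℝ)
    -- `d` is a distance function with respect to `μ`
    (hd_mix : ∀ π ∈ Δ, ∀ π' ∈ Δ, π ≠ π' → d π = d π' →
      ∃ l ∈ Set.Ioo (0 : ℝ) 1, d (l • π + (1 - l) • π') < d π)
    (hd_min : ∀ π ∈ Δ, π ≠ μ → d μ < d π)
    -- `d'` is a distance function with respect to `μ`
    (hd'_mix : ∀ π ∈ Δ, ∀ π' ∈ Δ, π ≠ π' → d' π = d' π' →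
      ∃ l ∈ Set.Ioo (0 : ℝ) 1, d' (l • π + (1 - l) • π') < d' π)
    (hd'_min : ∀ π ∈ Δ, π ≠ μ → d' μ < d' π)
    -- local nonsatiation with respect to `μ`
    (hd_lns : ∀ π ∈ Δ, π ≠ μ → ∀ ε > (0 : ℝ), ∃ π' ∈ Δ, ‖π - π'‖ < ε ∧ d π' < d π)
    (hd'_lns : ∀ π ∈ Δ, π ≠ μ → ∀ ε > (0 : ℝ), ∃ π' ∈ Δ, ‖π - π'‖ < ε ∧ d' π' < d' π)
    -- weak continuity
    (hd_wc : ∀ π ∈ Δ, ∀ π' ∈ Δ, d π < d π' →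
      ∃ ε > (0 : ℝ), ∀ π'' ∈ Δ, ‖π' - π''‖ < ε → d π < d π'')
    (hd'_wc : ∀ π ∈ Δ, ∀ π' ∈ Δ, d' π < d' π' →
      ∃ ε > (0 : ℝ), ∀ π'' ∈ Δ, ‖π' - π''‖ < ε → d' π < d' π'')
    -- mutual weak monotonicity
    (hmono : ∀ π ∈ Δ, ∀ π' ∈ Δ, (d π' < d π → d' π' ≤ d' π) ∧ (d' π' < d' π → d π' ≤ d π)) :
    ∀ π ∈ Δ, ∀ π' ∈ Δ, (d π' < d π ↔ d' π' < d' π) :=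
  stmt5_general (weaklyContinuousOn_iff_norm.2 hd_wc) (weaklyContinuousOn_iff_norm.2 hd'_wc)
    (locallyNonsatiatedOn_iff_norm.2 hd_lns) (locallyNonsatiatedOn_iff_norm.2 hd'_lns)
    (isMinOn_of_forall_ne_lt hd_min) (isMinOn_of_forall_ne_lt hd'_min)
    (fun π hπ π' hπ' ↦ (hmono π hπ π' hπ').1) (fun π hπ π' hπ' ↦ (hmono π hπ π' hπ').2)
end

section
/- Let S be a finite set, E a nonempty subset of S, and μ, ν probability distributions on S with μ(E) > 0 and ν(E) > 0. Then the following are equivalent: (i) for all functions a, b : S → ℝ, (1/μ(E))·Σ_{s∈E} μ(s)a(s) ≥ (1/μ(E))·Σ_{s∈E} μ(s)b(s) holds if and only if (1/ν(E))·Σ_{s∈E} ν(s)a(s) ≥ (1/ν(E))·Σ_{s∈E} ν(s)b(s); (ii) ν(s) = ν(E)·μ(s)/μ(E) for every s ∈ E. -/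
open Finset

/-!
A weighted mean fixes constants, so a function `a` and the constant function with value its `μ`-mean
have equal `μ`-means. If `ν` induces the same comparisons, they also have equal `ν`-means, so the
`ν`-mean of `a` is its `μ`-mean. Thus the comparisons determine the mean, and the mean determines
the normalized weights through its values on functions supported at a single point.
-/

theorem forall_le_iff_le_iff_eq_of_leftInverse {α β : Type*} [PartialOrder β] {c : β → α}
    {f g : α → β} (hf : Function.LeftInverse f c) (hg : Function.LeftInverse g c) :
    (∀ x y, f y ≤ f x ↔ g y ≤ g x) ↔ f = g := by
  refine ⟨fun h => funext fun x => ?_, fun h x y => h ▸ Iff.rfl⟩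
  have hfx : f (c (f x)) = f x := hf (f x)
  have hgx : g (c (f x)) = g x := le_antisymm ((h _ _).1 hfx.le) ((h _ _).1 hfx.ge)
  exact (hg (f x)).symm.trans hgx

section CenterMass

variable {S K V : Type*} [Field K] [AddCommGroup V] [Module K V] {E : Finset S}

theorem leftInverse_centerMass_const {w : S → K} (hw : ∑ s ∈ E, w s ≠ 0) :
    Function.LeftInverse (E.centerMass w) (Function.const S : V → S → V) :=
  E.centerMass_const hw

theorem centerMass_eq_sum_div_smul (w : S → K) (a : S → V) :
    E.centerMass w a = ∑ s ∈ E, (w s / ∑ s' ∈ E, w s') • a s := by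
  simp only [centerMass, smul_sum, smul_smul, div_eq_inv_mul]

theorem centerMass_pi_single [DecidableEq S] (w : S → K) {t : S} (ht : t ∈ E) (v : V) :
    E.centerMass w (Pi.single t v) = (w t / ∑ s ∈ E, w s) • v := by
  rw [centerMass_eq_sum_div_smul, sum_eq_single_of_mem t ht, Pi.single_eq_same]
  intro s _ hst
  rw [Pi.single_eq_of_ne hst, smul_zero]

theorem centerMass_eq_centerMass_iff [Nontrivial V] {μ ν : S → K} :
    (E.centerMass μ : (S → V) → V) = E.centerMass ν ↔
      ∀ s ∈ E, μ s / ∑ s' ∈ E, μ s' = ν s / ∑ s' ∈ E, ν s' := by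
  classical
  constructor
  · intro h t ht
    obtain ⟨v, hv⟩ := exists_ne (0 : V)
    apply smul_left_injective K hv
    simpa only [centerMass_pi_single _ ht] using congrFun h (Pi.single t v)
  · intro h
    funext a
    simp only [centerMass_eq_sum_div_smul]
    exact sum_congr rfl fun s hs => by rw [h s hs]

theorem stmt6_general [Nontrivial V] [PartialOrder V] {μ ν : S → K}
    (hμE : ∑ s ∈ E, μ s ≠ 0) (hνE : ∑ s ∈ E, ν s ≠ 0) :
    (∀ a b : S → V, E.centerMass μ b ≤ E.centerMass μ a ↔ E.centerMass ν b ≤ E.centerMass ν a) ↔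
      ∀ s ∈ E, ν s = (∑ s' ∈ E, ν s') * μ s / ∑ s' ∈ E, μ s' := by
  rw [forall_le_iff_le_iff_eq_of_leftInverse (leftInverse_centerMass_const hμE)
    (leftInverse_centerMass_const hνE), centerMass_eq_centerMass_iff]
  refine forall₂_congr fun s _ => ?_
  rw [eq_comm, div_eq_iff hνE, mul_comm, mul_div_assoc]

end CenterMass

/-- two distributions induce the same conditional expected-utility comparisons
on an event `E` iff `ν` is proportional to `μ` on `E`. -/
theorem stmt6 {S : Type*} [Fintype S] (E : Finset S) (hE : E.Nonempty)
    (μ ν : S → ℝ)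
    (hμpos : ∀ s, 0 ≤ μ s) (hμsum : ∑ s, μ s = 1)
    (hνpos : ∀ s, 0 ≤ ν s) (hνsum : ∑ s, ν s = 1)
    (hμE : 0 < ∑ s ∈ E, μ s) (hνE : 0 < ∑ s ∈ E, ν s) :
    (∀ a b : S → ℝ,
      ((1 / ∑ s ∈ E, μ s) * ∑ s ∈ E, μ s * b s ≤ (1 / ∑ s ∈ E, μ s) * ∑ s ∈ E, μ s * a s ↔
       (1 / ∑ s ∈ E, ν s) * ∑ s ∈ E, ν s * b s ≤ (1 / ∑ s ∈ E, ν s) * ∑ s ∈ E, ν s * a s))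
    ↔ (∀ s ∈ E, ν s = (∑ s' ∈ E, ν s') * μ s / ∑ s' ∈ E, μ s') := by
  simpa only [centerMass, smul_eq_mul, one_div] using stmt6_general (V := ℝ) hμE.ne' hνE.ne'
end

section
/- Let n ≥ 2, let μ ∈ Δ_n have full support, let σ : [0,∞) → ℝ be strictly concave and differentiable with σ(1) = 0, let E be a nonempty proper subset of {1,…,n}, and let 0 < α ≤ β < 1. Define γ := α if μ(E) < α, γ := μ(E) if α ≤ μ(E) ≤ β, and γ := β if μ(E) > β. Then the unique minimizer of the Bayesian divergence d_μ(π) = −Σ_{i=1}^n μ_i σ(π_i/μ_i) over {π ∈ Δ_n : α ≤ π(E) ≤ β} is the vector π* given by π*_i = γ·μ_i/μ(E) for i ∈ E and π*_i = (1−γ)·μ_i/μ(E^c) for i ∉ E. -/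
open Finset

/-!
Jensen's inequality on `E` and on `Eᶜ` shows that, among the beliefs giving `E` a prescribed
probability, the divergence from `μ` is minimized by rescaling `μ` on `E` and on `Eᶜ`. For a belief
`π` with `π(E) ∈ [α, β]`, the segment from `μ` to `π` contains a belief `ν` with `ν(E) = γ`, and the
divergence is convex with unique minimizer `μ`, so it strictly increases from `ν` to `π` unless
`ν = π`.
-/

section Jensen

variable {ι : Type*} {s : Finset ι} {w x : ι → ℝ} {σ : ℝ → ℝ} {D : Set ℝ} {c : ℝ}

lemma sum_div_sum_smul_div_eq (hw : ∀ i ∈ s, w i ≠ 0) (hW : ∑ i ∈ s, w i ≠ 0)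
    (hc : ∑ i ∈ s, x i = c * ∑ i ∈ s, w i) :
    ∑ i ∈ s, (w i / ∑ k ∈ s, w k) • (x i / w i) = c := calc
  _ = ∑ i ∈ s, x i / ∑ k ∈ s, w k := sum_congr rfl fun i hi ↦ by
    rw [smul_eq_mul, div_mul_div_comm, mul_comm (w i), mul_div_mul_right _ _ (hw i hi)]
  _ = c := by rw [← sum_div, hc, mul_div_cancel_right₀ _ hW]

lemma sum_mul_eq_sum_mul_sum_div_smul (hW : ∑ i ∈ s, w i ≠ 0) :
    ∑ i ∈ s, w i * x i = (∑ i ∈ s, w i) * ∑ i ∈ s, (w i / ∑ k ∈ s, w k) • x i := by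
  rw [mul_sum]
  refine sum_congr rfl fun i _ ↦ ?_
  rw [smul_eq_mul, ← mul_assoc, mul_div_cancel₀ _ hW]

lemma sum_mul_map_div_le_s8 (hσ : ConcaveOn ℝ D σ) (hw : ∀ i ∈ s, 0 < w i)
    (hx : ∀ i ∈ s, x i / w i ∈ D) (hc : ∑ i ∈ s, x i = c * ∑ i ∈ s, w i) :
    ∑ i ∈ s, w i * σ (x i / w i) ≤ (∑ i ∈ s, w i) * σ c := by
  obtain rfl | hs := s.eq_empty_or_nonempty
  · simp
  have hW : 0 < ∑ i ∈ s, w i := sum_pos hw hs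
  have hjensen := hσ.le_map_sum (fun i hi ↦ (div_pos (hw i hi) hW).le)
    (by rw [← sum_div, div_self hW.ne']) hx
  rw [sum_div_sum_smul_div_eq (fun i hi ↦ (hw i hi).ne') hW.ne' hc] at hjensen
  rw [sum_mul_eq_sum_mul_sum_div_smul hW.ne']
  exact mul_le_mul_of_nonneg_left hjensen hW.le

lemma sum_mul_map_div_lt (hσ : StrictConcaveOn ℝ D σ) (hw : ∀ i ∈ s, 0 < w i)
    (hx : ∀ i ∈ s, x i / w i ∈ D) (hc : ∑ i ∈ s, x i = c * ∑ i ∈ s, w i)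
    (hne : ∃ i ∈ s, x i ≠ c * w i) :
    ∑ i ∈ s, w i * σ (x i / w i) < (∑ i ∈ s, w i) * σ c := by
  obtain ⟨j, hj, hxj⟩ := hne
  have hW : 0 < ∑ i ∈ s, w i := sum_pos hw ⟨j, hj⟩
  have hmean := sum_div_sum_smul_div_eq (fun i hi ↦ (hw i hi).ne') hW.ne' hc
  have hjensen := (hσ.lt_map_sum_iff_of_pos' (fun i hi ↦ div_pos (hw i hi) hW)
    (by rw [← sum_div, div_self hW.ne']) hx).2
    ⟨j, hj, by rwa [hmean, Ne, div_eq_iff (hw j hj).ne']⟩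
  rw [hmean] at hjensen
  rw [sum_mul_eq_sum_mul_sum_div_smul hW.ne']
  exact mul_lt_mul_of_pos_left hjensen hW

end Jensen

lemma max_min_mem_uIcc {R : Type*} [LinearOrder R] {α β m p : R} (hp : p ∈ Set.Icc α β) :
    max α (min m β) ∈ Set.uIcc m p := by
  rw [Set.mem_uIcc]
  grind

lemma exists_mem_segment_sum_eq {ι : Type*} {μ π : ι → ℝ} {E : Finset ι} {γ : ℝ}
    (hγ : γ ∈ Set.uIcc (∑ i ∈ E, μ i) (∑ i ∈ E, π i)) :
    ∃ ν ∈ segment ℝ μ π, ∑ i ∈ E, ν i = γ := by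
  rw [← segment_eq_uIcc] at hγ
  obtain ⟨a, b, ha, hb, hab, rfl⟩ := hγ
  refine ⟨a • μ + b • π, ⟨a, b, ha, hb, hab, rfl⟩, ?_⟩
  simp only [Pi.add_apply, Pi.smul_apply, sum_add_distrib, smul_sum]

section Divergence

variable {ι : Type*} [Fintype ι]

/-- The Bayesian divergence `d_μ(π)` of a belief `π` from a prior `μ`, whose minimizer over an
information set is the posterior. It is meaningful only where `μ` has full support. -/
noncomputable def bayesDivergence (σ : ℝ → ℝ) (μ π : ι → ℝ) : ℝ :=
  -∑ i, μ i * σ (π i / μ i)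

/-- Interval information: the beliefs whose probability of `E` lies in `[α, β]`. -/
def intervalInformation (E : Finset ι) (α β : ℝ) : Set (ι → ℝ) :=
  {π | π ∈ stdSimplex ℝ ι ∧ α ≤ ∑ i ∈ E, π i ∧ ∑ i ∈ E, π i ≤ β}

/-- Jeffrey conditioning: the belief giving `E` probability `γ` and proportional to the prior `μ` on
`E` and on `Eᶜ`. It is meaningful only if `E` and `Eᶜ` have nonzero prior probability. -/
noncomputable def jeffreyUpdate [DecidableEq ι] (μ : ι → ℝ) (E : Finset ι) (γ : ℝ) : ι → ℝ :=
  fun i ↦ if i ∈ E then γ * μ i / ∑ j ∈ E, μ j else (1 - γ) * μ i / ∑ j ∈ Eᶜ, μ j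

variable {σ : ℝ → ℝ} {μ π ν : ι → ℝ}

lemma convexOn_bayesDivergence (hσ : ConcaveOn ℝ (Set.Ici 0) σ) (hμ : ∀ i, 0 ≤ μ i) :
    ConvexOn ℝ (Set.Ici 0) (bayesDivergence σ μ) := by
  refine ⟨convex_Ici 0, fun x hx y hy a b ha hb hab ↦ ?_⟩
  have hterm (i : ι) : a * (μ i * σ (x i / μ i)) + b * (μ i * σ (y i / μ i)) ≤
      μ i * σ ((a * x i + b * y i) / μ i) := by
    have h := hσ.2 (div_nonneg (hx i) (hμ i)) (div_nonneg (hy i) (hμ i)) ha hb hab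
    simp only [smul_eq_mul, ← mul_div_assoc, ← add_div] at h
    linarith [mul_le_mul_of_nonneg_left h (hμ i)]
  have hsum := sum_le_sum fun i (_ : i ∈ univ) ↦ hterm i
  simp only [sum_add_distrib, ← mul_sum] at hsum
  simp only [bayesDivergence, Pi.add_apply, Pi.smul_apply, smul_eq_mul]
  linarith

lemma bayesDivergence_self_lt (hσ : StrictConcaveOn ℝ (Set.Ici 0) σ) (hμ : ∀ i, 0 < μ i)
    (hμ' : μ ∈ stdSimplex ℝ ι) (hπ : π ∈ stdSimplex ℝ ι) (hne : π ≠ μ) :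
    bayesDivergence σ μ μ < bayesDivergence σ μ π := by
  obtain ⟨i, hi⟩ := Function.ne_iff.1 hne
  have hlt := sum_mul_map_div_lt (s := univ) (c := 1) hσ (fun i _ ↦ hμ i)
    (fun i _ ↦ div_nonneg (hπ.1 i) (hμ i).le) (by rw [hπ.2, hμ'.2, one_mul])
    ⟨i, mem_univ i, by rwa [one_mul]⟩
  simpa only [bayesDivergence, div_self (hμ _).ne', ← sum_mul, neg_lt_neg_iff] using hlt

lemma bayesDivergence_lt_of_mem_segment (hσ : StrictConcaveOn ℝ (Set.Ici 0) σ)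
    (hμ : ∀ i, 0 < μ i) (hμ' : μ ∈ stdSimplex ℝ ι) (hπ : π ∈ stdSimplex ℝ ι)
    (hν : ν ∈ segment ℝ μ π) (hne : ν ≠ π) :
    bayesDivergence σ μ ν < bayesDivergence σ μ π := by
  by_cases hνμ : ν = μ
  · subst hνμ
    exact bayesDivergence_self_lt hσ hμ hμ' hπ hne.symm
  · exact (convexOn_bayesDivergence hσ.concaveOn fun i ↦ (hμ i).le).lt_right_of_left_lt hμ'.1 hπ.1
      (mem_openSegment_of_ne_left_right (Ne.symm hνμ) hne.symm hν)
      (bayesDivergence_self_lt hσ hμ hμ' ((convex_stdSimplex ℝ ι).segment_subset hμ' hπ hν) hνμ)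

end Divergence

section JeffreyUpdate

variable {ι : Type*} [Fintype ι] [DecidableEq ι] {σ : ℝ → ℝ} {μ π : ι → ℝ} {E : Finset ι} {γ : ℝ}

lemma jeffreyUpdate_of_mem {i : ι} (hi : i ∈ E) :
    jeffreyUpdate μ E γ i = γ / (∑ j ∈ E, μ j) * μ i := by
  rw [jeffreyUpdate, if_pos hi, mul_div_right_comm]

lemma jeffreyUpdate_of_mem_compl {i : ι} (hi : i ∈ Eᶜ) :
    jeffreyUpdate μ E γ i = (1 - γ) / (∑ j ∈ Eᶜ, μ j) * μ i := by
  rw [jeffreyUpdate, if_neg (mem_compl.1 hi), mul_div_right_comm]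

lemma sum_jeffreyUpdate (hE : ∑ i ∈ E, μ i ≠ 0) : ∑ i ∈ E, jeffreyUpdate μ E γ i = γ := by
  rw [sum_congr rfl fun i ↦ jeffreyUpdate_of_mem, ← mul_sum, div_mul_cancel₀ _ hE]

lemma sum_compl_jeffreyUpdate (hE : ∑ i ∈ Eᶜ, μ i ≠ 0) :
    ∑ i ∈ Eᶜ, jeffreyUpdate μ E γ i = 1 - γ := by
  rw [sum_congr rfl fun i ↦ jeffreyUpdate_of_mem_compl, ← mul_sum, div_mul_cancel₀ _ hE]

lemma jeffreyUpdate_mem_stdSimplex (hμ : ∀ i, 0 ≤ μ i) (hE : ∑ i ∈ E, μ i ≠ 0)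
    (hEc : ∑ i ∈ Eᶜ, μ i ≠ 0) (hγ : γ ∈ Set.Icc 0 1) :
    jeffreyUpdate μ E γ ∈ stdSimplex ℝ ι := by
  constructor
  · intro i
    have h1γ : 0 ≤ 1 - γ := sub_nonneg.2 hγ.2
    unfold jeffreyUpdate
    split_ifs
    · exact div_nonneg (mul_nonneg hγ.1 (hμ i)) (sum_nonneg fun j _ ↦ hμ j)
    · exact div_nonneg (mul_nonneg h1γ (hμ i)) (sum_nonneg fun j _ ↦ hμ j)
  · rw [← sum_add_sum_compl E, sum_jeffreyUpdate hE, sum_compl_jeffreyUpdate hEc,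
      add_sub_cancel]

lemma bayesDivergence_jeffreyUpdate (hμ : ∀ i, μ i ≠ 0) :
    bayesDivergence σ μ (jeffreyUpdate μ E γ) =
      -((∑ i ∈ E, μ i) * σ (γ / ∑ i ∈ E, μ i) +
        (∑ i ∈ Eᶜ, μ i) * σ ((1 - γ) / ∑ i ∈ Eᶜ, μ i)) := by
  rw [bayesDivergence, ← sum_add_sum_compl E, sum_mul, sum_mul]
  congr 2 <;> refine sum_congr rfl fun i hi ↦ ?_
  · rw [jeffreyUpdate_of_mem hi, mul_div_cancel_right₀ _ (hμ i)]
  · rw [jeffreyUpdate_of_mem_compl hi, mul_div_cancel_right₀ _ (hμ i)]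

lemma sum_compl_eq_div_mul_sum_compl (hπ : ∑ i, π i = 1) (hEc : ∑ i ∈ Eᶜ, μ i ≠ 0) :
    ∑ i ∈ Eᶜ, π i = (1 - ∑ i ∈ E, π i) / (∑ i ∈ Eᶜ, μ i) * ∑ i ∈ Eᶜ, μ i := by
  rw [div_mul_cancel₀ _ hEc, eq_sub_iff_add_eq', ← hπ, sum_add_sum_compl]

lemma bayesDivergence_jeffreyUpdate_le (hσ : ConcaveOn ℝ (Set.Ici 0) σ)
    (hμ : ∀ i, 0 < μ i) (hE : E.Nonempty) (hEc : Eᶜ.Nonempty) (hπ : π ∈ stdSimplex ℝ ι) :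
    bayesDivergence σ μ (jeffreyUpdate μ E (∑ i ∈ E, π i)) ≤ bayesDivergence σ μ π := by
  have hpos (s : Finset ι) : ∀ i ∈ s, 0 < μ i := fun i _ ↦ hμ i
  have hratio (s : Finset ι) : ∀ i ∈ s, π i / μ i ∈ Set.Ici 0 :=
    fun i _ ↦ div_nonneg (hπ.1 i) (hμ i).le
  have hsumE := (div_mul_cancel₀ (∑ i ∈ E, π i) (sum_pos (hpos E) hE).ne').symm
  have hsumEc := sum_compl_eq_div_mul_sum_compl hπ.2 (sum_pos (hpos Eᶜ) hEc).ne'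
  rw [bayesDivergence_jeffreyUpdate fun i ↦ (hμ i).ne', bayesDivergence, neg_le_neg_iff,
    ← sum_add_sum_compl E]
  exact add_le_add (sum_mul_map_div_le_s8 hσ (hpos E) (hratio E) hsumE)
    (sum_mul_map_div_le_s8 hσ (hpos Eᶜ) (hratio Eᶜ) hsumEc)

lemma bayesDivergence_jeffreyUpdate_lt (hσ : StrictConcaveOn ℝ (Set.Ici 0) σ)
    (hμ : ∀ i, 0 < μ i) (hE : E.Nonempty) (hEc : Eᶜ.Nonempty) (hπ : π ∈ stdSimplex ℝ ι)
    (hne : π ≠ jeffreyUpdate μ E (∑ i ∈ E, π i)) :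
    bayesDivergence σ μ (jeffreyUpdate μ E (∑ i ∈ E, π i)) < bayesDivergence σ μ π := by
  have hpos (s : Finset ι) : ∀ i ∈ s, 0 < μ i := fun i _ ↦ hμ i
  have hratio (s : Finset ι) : ∀ i ∈ s, π i / μ i ∈ Set.Ici 0 :=
    fun i _ ↦ div_nonneg (hπ.1 i) (hμ i).le
  have hsumE := (div_mul_cancel₀ (∑ i ∈ E, π i) (sum_pos (hpos E) hE).ne').symm
  have hsumEc := sum_compl_eq_div_mul_sum_compl hπ.2 (sum_pos (hpos Eᶜ) hEc).ne'
  rw [bayesDivergence_jeffreyUpdate fun i ↦ (hμ i).ne', bayesDivergence, neg_lt_neg_iff,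
    ← sum_add_sum_compl E]
  obtain ⟨i, hi⟩ := Function.ne_iff.1 hne
  by_cases hiE : i ∈ E
  · exact add_lt_add_of_lt_of_le
      (sum_mul_map_div_lt hσ (hpos E) (hratio E) hsumE ⟨i, hiE, by
        rwa [jeffreyUpdate_of_mem hiE] at hi⟩)
      (sum_mul_map_div_le_s8 hσ.concaveOn (hpos Eᶜ) (hratio Eᶜ) hsumEc)
  · have hiEc : i ∈ Eᶜ := mem_compl.2 hiE
    exact add_lt_add_of_le_of_lt
      (sum_mul_map_div_le_s8 hσ.concaveOn (hpos E) (hratio E) hsumE)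
      (sum_mul_map_div_lt hσ (hpos Eᶜ) (hratio Eᶜ) hsumEc ⟨i, hiEc, by
        rwa [jeffreyUpdate_of_mem_compl hiEc] at hi⟩)

theorem stmt8_general (hμ : ∀ i, 0 < μ i) (hμ1 : ∑ i, μ i = 1)
    (hσ : StrictConcaveOn ℝ (Set.Ici 0) σ) (hE : E.Nonempty) (hE' : E ≠ univ)
    {α β : ℝ} (hα : α ≤ 1) (hαβ : α ≤ β) (hβ : 0 ≤ β)
    (hγ : γ = max α (min (∑ i ∈ E, μ i) β)) :
    jeffreyUpdate μ E γ ∈ intervalInformation E α β ∧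
      ∀ π ∈ intervalInformation E α β, π ≠ jeffreyUpdate μ E γ →
        bayesDivergence σ μ (jeffreyUpdate μ E γ) < bayesDivergence σ μ π := by
  have hEc : Eᶜ.Nonempty := by
    rwa [← compl_ne_univ_iff_nonempty, compl_compl]
  have hμE : 0 < ∑ i ∈ E, μ i := sum_pos (fun i _ ↦ hμ i) hE
  have hμEc : 0 < ∑ i ∈ Eᶜ, μ i := sum_pos (fun i _ ↦ hμ i) hEc
  have hμ' : μ ∈ stdSimplex ℝ ι := ⟨fun i ↦ (hμ i).le, hμ1⟩
  have hγ01 : γ ∈ Set.Icc 0 1 := by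
    rw [← sum_add_sum_compl E] at hμ1
    rw [Set.mem_Icc]
    grind
  refine ⟨⟨jeffreyUpdate_mem_stdSimplex hμ'.1 hμE.ne' hμEc.ne' hγ01, ?_⟩, ?_⟩
  · rw [sum_jeffreyUpdate hμE.ne', hγ]
    exact ⟨le_max_left _ _, max_le hαβ (min_le_right _ _)⟩
  · rintro π ⟨hπ, hπE⟩ hne
    obtain ⟨ν, hν, rfl⟩ := exists_mem_segment_sum_eq (hγ ▸ max_min_mem_uIcc hπE)
    by_cases hνπ : ν = π
    · subst hνπ
      exact bayesDivergence_jeffreyUpdate_lt hσ hμ hE hEc hπ hne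
    · calc bayesDivergence σ μ (jeffreyUpdate μ E (∑ i ∈ E, ν i))
          ≤ bayesDivergence σ μ ν := bayesDivergence_jeffreyUpdate_le hσ.concaveOn hμ hE
            hEc ((convex_stdSimplex ℝ ι).segment_subset hμ' hπ hν)
        _ < bayesDivergence σ μ π := bayesDivergence_lt_of_mem_segment hσ hμ hμ' hπ hν hνπ

end JeffreyUpdate

/-- for interval information `{π : α ≤ π(E) ≤ β}`, the unique minimizer of any
Bayesian divergence is the proportional posterior at `γ`, the point of `[α,β]` closest
to `μ(E)`. -/
theorem stmt8 (n : ℕ) (hn : 2 ≤ n) (μ : Fin n → ℝ)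
    (hμpos : ∀ i, 0 < μ i) (hμsum : ∑ i, μ i = 1)
    (σ : ℝ → ℝ) (hσconc : StrictConcaveOn ℝ (Set.Ici (0 : ℝ)) σ)
    (hσdiff : DifferentiableOn ℝ σ (Set.Ici (0 : ℝ))) (hσ1 : σ 1 = 0)
    (E : Finset (Fin n)) (hE : E.Nonempty) (hEne : E ≠ Finset.univ)
    (α β : ℝ) (hα : 0 < α) (hαβ : α ≤ β) (hβ : β < 1)
    (γ : ℝ)
    (hγ₁ : (∑ i ∈ E, μ i) < α → γ = α)
    (hγ₂ : α ≤ (∑ i ∈ E, μ i) → (∑ i ∈ E, μ i) ≤ β → γ = ∑ i ∈ E, μ i)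
    (hγ₃ : β < (∑ i ∈ E, μ i) → γ = β)
    (d : (Fin n → ℝ) → ℝ) (hd : ∀ π, d π = -∑ i, μ i * σ (π i / μ i))
    (C : Set (Fin n → ℝ))
    (hC : C = {π | (∀ i, 0 ≤ π i) ∧ (∑ i, π i = 1) ∧
      α ≤ (∑ i ∈ E, π i) ∧ (∑ i ∈ E, π i) ≤ β})
    (πstar : Fin n → ℝ)
    (hπstar : ∀ i, πstar i = if i ∈ E then γ * μ i / (∑ j ∈ E, μ j)
      else (1 - γ) * μ i / (∑ j ∈ Eᶜ, μ j)) :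
    πstar ∈ C ∧ ∀ π ∈ C, π ≠ πstar → d πstar < d π := by
  rw [hC.trans (Set.ext fun _ ↦ and_assoc.symm : _ = intervalInformation E α β),
    (funext hd : d = bayesDivergence σ μ), (funext hπstar : πstar = jeffreyUpdate μ E γ)]
  exact stmt8_general hμpos hμsum hσconc hE hEne (hαβ.trans hβ.le) hαβ (hα.le.trans hαβ) (by grind)
end

section
/- Let k ∈ ℝ and let σ : (0,1] → ℝ be continuous with σ(1) = 0 and satisfy σ(αβ) = σ(α) + σ(β) + k·σ(α)·σ(β) for all α, β ∈ (0,1]. If k = 0, then there exists ζ ∈ ℝ such that σ(x) = ζ·ln x for all x ∈ (0,1]. If k ≠ 0, then there exists γ ∈ ℝ such that σ(x) = (x^γ − 1)/k for all x ∈ (0,1]. -/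
/-!
The map `t ↦ exp (-t)` identifies the additive monoid `[0, ∞)` with the multiplicative monoid
`(0, 1]`, so Cauchy's equation on `[0, ∞)` shows that a continuous `f` on `(0, 1]` with
`f (x y) = f x + f y` is a multiple of `log`. This settles `k = 0`. For `k ≠ 0` the function
`F = 1 + k σ` is multiplicative with `F 1 = 1`. Since `F x = F (x ^ (1 / n)) ^ n` and
`x ^ (1 / n) → 1`, continuity at `1` forces `F x ≠ 0`; then `F x = F (√x) ^ 2 > 0`, and `log ∘ F` is
again a solution of the additive equation.
-/

open Filter Topology
open scoped NNReal

theorem denseRange_nnratCast_nnreal : DenseRange ((↑) : ℚ≥0 → ℝ≥0) :=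
  dense_of_exists_between fun a b hab ↦ by
    obtain ⟨q, haq, hqb⟩ := exists_rat_btwn (NNReal.coe_lt_coe.2 hab)
    lift q to ℚ≥0 using Rat.cast_nonneg.1 (a.2.trans haq.le)
    exact ⟨q, ⟨q, rfl⟩, by exact_mod_cast haq, by exact_mod_cast hqb⟩

theorem map_nnreal_smul {M N G : Type*} [AddCommMonoid M] [Module ℝ≥0 M] [TopologicalSpace M]
    [ContinuousSMul ℝ≥0 M] [AddCommMonoid N] [Module ℝ≥0 N] [TopologicalSpace N]
    [ContinuousSMul ℝ≥0 N] [T2Space N] [FunLike G M N] [AddMonoidHomClass G M N]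
    (f : G) (hf : Continuous f) (c : ℝ≥0) (x : M) : f (c • x) = c • f x :=
  suffices (fun c : ℝ≥0 ↦ f (c • x)) = fun c : ℝ≥0 ↦ c • f x from congr_fun this c
  denseRange_nnratCast_nnreal.equalizer (by fun_prop) (by fun_prop)
    (funext fun q ↦ map_nnratCast_smul f ℝ≥0 ℝ≥0 q x)

/-- The homomorphism `t ↦ exp (-t)` from `[0, ∞)` to `(0, 1]`, which turns multiplicative functional
equations on `(0, 1]` into additive ones. The target is written additively through `Additive`. -/
noncomputable def expNegHom : ℝ≥0 →+ Additive (Set.Ioc (0 : ℝ) 1) where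
  toFun t := .ofMul ⟨Real.exp (-t), Real.exp_pos _, by simp⟩
  map_zero' := congrArg Additive.ofMul <| Subtype.ext <| by simp
  map_add' s t := congrArg Additive.ofMul <| Subtype.ext <| by
    simp [Real.exp_add, mul_comm]

theorem continuous_expNegHom : Continuous expNegHom :=
  continuous_ofMul.comp <| by fun_prop

theorem expNegHom_toNNReal_neg_log (x : Set.Ioc (0 : ℝ) 1) :
    expNegHom (-Real.log x).toNNReal = .ofMul x := by
  have hlog : 0 ≤ -Real.log x := neg_nonneg.2 (Real.log_nonpos x.2.1.le x.2.2)
  refine congrArg Additive.ofMul (Subtype.ext ?_)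
  simp only [Real.coe_toNNReal _ hlog, neg_neg, Real.exp_log x.2.1]

theorem exists_eq_log_smul_of_continuous {E : Type*} [AddCommGroup E] [Module ℝ E]
    [TopologicalSpace E] [ContinuousSMul ℝ E] [T2Space E]
    (f : Additive (Set.Ioc (0 : ℝ) 1) →+ E) (hf : Continuous f) :
    ∃ c : E, ∀ x : Set.Ioc (0 : ℝ) 1, f (.ofMul x) = Real.log x • c := by
  refine ⟨-f (expNegHom 1), fun x ↦ ?_⟩
  have hlog : 0 ≤ -Real.log x := neg_nonneg.2 (Real.log_nonpos x.2.1.le x.2.2)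
  calc f (.ofMul x) = (f.comp expNegHom) ((-Real.log x).toNNReal • 1) := by
        rw [smul_eq_mul, mul_one, AddMonoidHom.comp_apply, expNegHom_toNNReal_neg_log]
    _ = (-Real.log x).toNNReal • f (expNegHom 1) :=
        map_nnreal_smul (f.comp expNegHom) (hf.comp continuous_expNegHom) _ _
    _ = Real.log x • -f (expNegHom 1) := by
        rw [NNReal.smul_def, Real.coe_toNNReal _ hlog, neg_smul, smul_neg]

theorem map_ne_zero_of_tendsto_roots {ι M M₀ : Type*} [Monoid M] [TopologicalSpace M]
    [MonoidWithZero M₀] [NoZeroDivisors M₀] [Nontrivial M₀] [TopologicalSpace M₀] [T1Space M₀]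
    {f : M →* M₀} (hf : ContinuousAt f 1) {l : Filter ι} [l.NeBot] {r : ι → M} {n : ι → ℕ} {x : M}
    (hr : Tendsto r l (𝓝 1)) (hrx : ∀ᶠ i in l, r i ^ n i = x) : f x ≠ 0 := by
  have hne : ∀ᶠ i in l, f (r i) ≠ 0 :=
    hr.eventually <| hf.eventually_ne <| by rw [map_one]; exact one_ne_zero
  obtain ⟨i, hi, hix⟩ := (hne.and hrx).exists
  rw [← hix, map_pow]
  exact pow_ne_zero _ hi

/-- The power `x ^ s` with `0 ≤ s` as an element of the monoid `(0, 1]`. It supplies the `n`-th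
roots `x ^ (1 / n)` of `x` in that monoid. -/
noncomputable def unitRpow (x : Set.Ioc (0 : ℝ) 1) (s : ℝ≥0) : Set.Ioc (0 : ℝ) 1 :=
  ⟨(x : ℝ) ^ (s : ℝ), Real.rpow_pos_of_pos x.2.1 _, Real.rpow_le_one x.2.1.le x.2.2 s.2⟩

theorem unitRpow_inv_natCast_pow (x : Set.Ioc (0 : ℝ) 1) {n : ℕ} (hn : n ≠ 0) :
    unitRpow x (n : ℝ≥0)⁻¹ ^ n = x :=
  Subtype.ext <| by
    simpa [unitRpow] using Real.rpow_inv_natCast_pow x.2.1.le hn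

theorem tendsto_unitRpow_inv_natCast (x : Set.Ioc (0 : ℝ) 1) :
    Tendsto (fun n : ℕ ↦ unitRpow x (n : ℝ≥0)⁻¹) atTop (𝓝 1) := by
  have h := (Real.continuous_const_rpow x.2.1.ne').tendsto 0 |>.comp
    (tendsto_inv_atTop_nhds_zero_nat (𝕜 := ℝ))
  rw [Real.rpow_zero] at h
  refine tendsto_subtype_rng.2 ?_
  simpa [unitRpow, Function.comp_def] using h

theorem map_pos_of_continuousAt_one (F : Set.Ioc (0 : ℝ) 1 →* ℝ) (hF : ContinuousAt F 1)
    (x : Set.Ioc (0 : ℝ) 1) : 0 < F x := by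
  have hne : F x ≠ 0 := map_ne_zero_of_tendsto_roots hF (tendsto_unitRpow_inv_natCast x) <|
    (eventually_ne_atTop 0).mono fun _ ↦ unitRpow_inv_natCast_pow x
  have hsq : F x = F (unitRpow x (2 : ℕ)⁻¹) ^ 2 := by
    rw [← map_pow, unitRpow_inv_natCast_pow x two_ne_zero]
  exact (hsq ▸ sq_nonneg _ : 0 ≤ F x).lt_of_ne' hne

theorem exists_eq_rpow_of_continuous (F : Set.Ioc (0 : ℝ) 1 →* ℝ) (hF : Continuous F) :
    ∃ γ : ℝ, ∀ x : Set.Ioc (0 : ℝ) 1, F x = (x : ℝ) ^ γ := by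
  have hpos : ∀ x, 0 < F x := map_pos_of_continuousAt_one F hF.continuousAt
  let logF : Additive (Set.Ioc (0 : ℝ) 1) →+ ℝ :=
    { toFun := fun x ↦ Real.log (F x.toMul)
      map_zero' := by simp
      map_add' := fun x y ↦ by
        rw [toMul_add, map_mul, Real.log_mul (hpos _).ne' (hpos _).ne'] }
  obtain ⟨γ, hγ⟩ := exists_eq_log_smul_of_continuous logF <|
    (hF.comp continuous_toMul).log fun x ↦ (hpos x.toMul).ne'
  refine ⟨γ, fun x ↦ ?_⟩
  calc F x = Real.exp (logF (.ofMul x)) := (Real.exp_log (hpos x)).symm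
    _ = (x : ℝ) ^ γ := by rw [hγ, smul_eq_mul, Real.rpow_def_of_pos x.2.1]

/-- solutions of the functional equation
`σ(αβ) = σ(α) + σ(β) + k σ(α) σ(β)` on `(0,1]` for continuous `σ` with `σ(1) = 0`. -/
theorem stmt11 (k : ℝ) (σ : ℝ → ℝ)
    (hcont : ContinuousOn σ (Set.Ioc (0 : ℝ) 1)) (hσ1 : σ 1 = 0)
    (hfe : ∀ α ∈ Set.Ioc (0 : ℝ) 1, ∀ β ∈ Set.Ioc (0 : ℝ) 1,
      σ (α * β) = σ α + σ β + k * σ α * σ β) :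
    (k = 0 → ∃ ζ : ℝ, ∀ x ∈ Set.Ioc (0 : ℝ) 1, σ x = ζ * Real.log x) ∧
    (k ≠ 0 → ∃ γ : ℝ, ∀ x ∈ Set.Ioc (0 : ℝ) 1, σ x = (x ^ γ - 1) / k) := by
  refine ⟨fun hk ↦ ?_, fun hk ↦ ?_⟩
  · let f : Additive (Set.Ioc (0 : ℝ) 1) →+ ℝ :=
      { toFun := fun x ↦ σ x.toMul
        map_zero' := hσ1
        map_add' := fun x y ↦ by simpa [hk] using hfe _ x.toMul.2 _ y.toMul.2 }
    obtain ⟨ζ, hζ⟩ := exists_eq_log_smul_of_continuous f (hcont.domRestrict.comp continuous_toMul)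
    exact ⟨ζ, fun x hx ↦ (hζ ⟨x, hx⟩).trans (mul_comm _ _)⟩
  · let F : Set.Ioc (0 : ℝ) 1 →* ℝ :=
      { toFun := fun x ↦ 1 + k * σ x
        map_one' := by simp [hσ1]
        map_mul' := fun x y ↦ by rw [Set.Ioc.coe_mul, hfe _ x.2 _ y.2]; ring }
    obtain ⟨γ, hγ⟩ := exists_eq_rpow_of_continuous F
      (continuous_const.add (continuous_const.mul hcont.domRestrict))
    refine ⟨γ, fun x hx ↦ (eq_div_iff hk).2 ?_⟩
    have hFx : 1 + k * σ x = x ^ γ := hγ ⟨x, hx⟩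
    linarith
end

section
/- Let σ : (0,∞) → ℝ be strictly concave and differentiable, and let a, b ∈ ℝ with 0 < a < b and a + b < 1. Define F(x,y) = −[a·σ(x/a) + b·σ(y/b) + (1−a−b)·σ((1−x−y)/(1−a−b))] on the set K = {(x,y) ∈ ℝ² : x ≥ y ≥ 0 and x + y ≤ 1}. If (x*, y*) minimizes F over K and satisfies y* > 0 and x* + y* < 1, then x* = y*. -/
/-!
The third summand of `F` depends only on `x + y`, so it does not change when mass is transferred
from `x` to `y`. If `y < x`, averaging the two coordinates stays in `K`; since `a ≤ b`, the secant
of `σ` over the interval crossed by `y / b` is steeper than the one over the interval crossed by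
`x / a`, so by strict concavity the transfer strictly decreases `F`.
-/

section StrictConcave

variable {𝕜 : Type*} [Field 𝕜] [LinearOrder 𝕜] [IsStrictOrderedRing 𝕜]
  {s : Set 𝕜} {f : 𝕜 → 𝕜} {a b x y : 𝕜}

-- Both secants are compared with the one over `[p, t]`, so the two intervals may overlap.
theorem secant_lt_secant_of_strictConcaveOn {p q r t : 𝕜} (hf : StrictConcaveOn 𝕜 s f)
    (hp : p ∈ s) (ht : t ∈ s) (hpq : p < q) (hqt : q < t) (hpr : p < r) (hrt : r < t) :
    (f t - f r) / (t - r) < (f q - f p) / (q - p) := by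
  have hq : q ∈ s := hf.1.ordConnected.out hp ht ⟨hpq.le, hqt.le⟩
  have hr : r ∈ s := hf.1.ordConnected.out hp ht ⟨hpr.le, hrt.le⟩
  calc (f t - f r) / (t - r)
      = (f r - f t) / (r - t) := by rw [← neg_sub (f r), ← neg_sub r, neg_div_neg_eq]
    _ < (f p - f t) / (p - t) := hf.secant_strict_mono ht hp hr (hpr.trans hrt).ne hrt.ne hpr
    _ = (f t - f p) / (t - p) := by rw [← neg_sub (f t), ← neg_sub t, neg_div_neg_eq]
    _ < (f q - f p) / (q - p) := hf.secant_strict_mono hp hq ht hpq.ne' (hpr.trans hrt).ne' hqt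

theorem weighted_add_lt_weighted_add_of_transfer {x' y' : 𝕜} (hf : StrictConcaveOn 𝕜 s f)
    (ha : 0 < a) (hb : 0 < b) (hx : x / a ∈ s) (hy : y / b ∈ s) (hsum : x + y = x' + y')
    (hx' : x' < x) (hlow : y / b < x' / a) (hhigh : y' / b < x / a) :
    a * f (x / a) + b * f (y / b) < a * f (x' / a) + b * f (y' / b) := by
  have hδ : 0 < x - x' := sub_pos.2 hx'
  have htransfer : y' - y = x - x' := by linear_combination -hsum
  have hy' : y < y' := sub_pos.1 (htransfer ▸ hδ)
  have hsecant : (f (x / a) - f (x' / a)) / (x / a - x' / a) <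
      (f (y' / b) - f (y / b)) / (y' / b - y / b) :=
    secant_lt_secant_of_strictConcaveOn hf hy hx (div_lt_div_of_pos_right hy' hb) hhigh hlow
      (div_lt_div_of_pos_right hx' ha)
  have hgain : a * (f (x / a) - f (x' / a)) < b * (f (y' / b) - f (y / b)) := by
    rwa [← sub_div, ← sub_div, htransfer, div_div_eq_mul_div, div_div_eq_mul_div,
      div_lt_div_iff_of_pos_right hδ, mul_comm _ a, mul_comm _ b] at hsecant
  linarith

theorem weighted_add_lt_weighted_add_average (hf : StrictConcaveOn 𝕜 (Set.Ioi 0) f)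
    (ha : 0 < a) (hab : a ≤ b) (hy : 0 < y) (hyx : y < x) :
    a * f (x / a) + b * f (y / b) < a * f ((x + y) / 2 / a) + b * f ((x + y) / 2 / b) := by
  have hb : 0 < b := ha.trans_le hab
  have hx : 0 < x := hy.trans hyx
  have hlow : y / b < (x + y) / 2 / a := div_lt_div₀ (by linarith) hab (by linarith) ha
  have hhigh : (x + y) / 2 / b < x / a := div_lt_div₀ (by linarith) hab hx.le ha
  exact weighted_add_lt_weighted_add_of_transfer hf ha hb (div_pos hx ha) (div_pos hy hb)
    (add_halves (x + y)).symm (by linarith) hlow hhigh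

theorem stmt13_general (hf : StrictConcaveOn 𝕜 (Set.Ioi 0) f) (ha : 0 < a) (hab : a ≤ b)
    {g : 𝕜 → 𝕜} {F : 𝕜 → 𝕜 → 𝕜}
    (hF : ∀ u v, F u v = -(a * f (u / a) + b * f (v / b) + g (u + v)))
    {K : Set (𝕜 × 𝕜)} (hK : K = {p | p.2 ≤ p.1 ∧ 0 ≤ p.2 ∧ p.1 + p.2 ≤ 1})
    (hmem : (x, y) ∈ K) (hmin : ∀ p ∈ K, F x y ≤ F p.1 p.2) (hy : 0 < y) :
    x = y := by
  subst hK
  obtain ⟨hyx : y ≤ x, -, hsum : x + y ≤ 1⟩ := hmem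
  by_contra hne
  have hlt : y < x := hyx.lt_of_ne' hne
  have haverage := hmin ((x + y) / 2, (x + y) / 2)
    ⟨le_rfl, (half_pos (add_pos (hy.trans hlt) hy)).le, (add_halves (x + y)).trans_le hsum⟩
  rw [hF, hF, add_halves] at haverage
  have hgain := weighted_add_lt_weighted_add_average hf ha hab hy hlt
  linarith

end StrictConcave

/-- an interior minimizer (with `y* > 0`, `x* + y* < 1`) of the Bayesian
divergence over the qualitative-information constraint set `{x ≥ y ≥ 0, x + y ≤ 1}`
satisfies `x* = y*`. -/
theorem stmt13 (σ : ℝ → ℝ)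
    (hconc : StrictConcaveOn ℝ (Set.Ioi (0 : ℝ)) σ)
    (hdiff : DifferentiableOn ℝ σ (Set.Ioi (0 : ℝ)))
    (a b : ℝ) (ha : 0 < a) (hab : a < b) (hab1 : a + b < 1)
    (F : ℝ → ℝ → ℝ)
    (hF : ∀ x y, F x y = -(a * σ (x / a) + b * σ (y / b) +
      (1 - a - b) * σ ((1 - x - y) / (1 - a - b))))
    (K : Set (ℝ × ℝ))
    (hK : K = {p : ℝ × ℝ | p.2 ≤ p.1 ∧ 0 ≤ p.2 ∧ p.1 + p.2 ≤ 1})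
    (x y : ℝ) (hmem : (x, y) ∈ K)
    (hmin : ∀ p ∈ K, F x y ≤ F p.1 p.2)
    (hy : 0 < y) (hsum : x + y < 1) :
    x = y :=
  stmt13_general (g := fun s ↦ (1 - a - b) * σ ((1 - s) / (1 - a - b))) hconc ha hab.le
    (fun u v ↦ by rw [hF, sub_sub 1 u v]) hK hmem hmin hy
end

section
/- Let a, b, c > 0 and α, β ∈ (0,1). Let σ¹ : (0,∞) → ℝ be strictly increasing and differentiable with strictly decreasing derivative, let h : ℝ → ℝ be strictly increasing and differentiable with strictly decreasing derivative, and set σ² := h ∘ σ¹, so that (σ²)'(x) = h'(σ¹(x))·(σ¹)'(x). Suppose γ¹, γ² ∈ (0, min(α,β)) satisfy the first-order conditions (σ^k)'(γ^k/a) = (σ^k)'((α−γ^k)/b) + (σ^k)'((β−γ^k)/c) for k = 1 and k = 2, respectively. Then γ¹ < γ². -/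
/-!
Write `φ = σ₁'`. The gap `φ (γ / a) - ∑ i, φ ((α i - γ) / b i)` vanishes at `γ₁` and is antitone in
`γ`, so if `γ₂ ≤ γ₁` it is nonnegative at `γ₂`. As `φ` is positive and there are at least two
summands, each of them is then smaller than `φ (γ₂ / a)`, which forces
`γ₂ / a < (α i - γ₂) / b i`. Replacing `φ` by `σ₂' = (h' ∘ σ₁) * φ` weights the term with the
smallest argument most, so the gap becomes strictly positive, contradicting the first-order
condition for `σ₂`.
-/

open Set

theorem pos_of_strictMonoOn_of_antitoneOn {f f' : ℝ → ℝ} {s : Set ℝ} (hs : s.OrdConnected)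
    (hf : StrictMonoOn f s) (hderiv : ∀ x ∈ s, HasDerivAt f (f' x) x) (hf' : AntitoneOn f' s)
    {x y : ℝ} (hx : x ∈ s) (hy : y ∈ s) (hxy : x < y) : 0 < f' x := by
  have hsub : Icc x y ⊆ s := hs.out hx hy
  obtain ⟨z, hz, hslope⟩ := exists_hasDerivAt_eq_slope f f' hxy
    (fun t ht => (hderiv t (hsub ht)).continuousAt.continuousWithinAt)
    (fun t ht => hderiv t (hsub (Ioo_subset_Icc_self ht)))
  calc
    0 < (f y - f x) / (y - x) := div_pos (sub_pos.2 (hf hx hy hxy)) (sub_pos.2 hxy)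
    _ = f' z := hslope.symm
    _ ≤ f' x := hf' hx (hsub (Ioo_subset_Icc_self hz)) hz.1.le

theorem outer_hasDerivAt_nonneg_of_monotoneOn_comp {f g : ℝ → ℝ} {f' g' x : ℝ} {s : Set ℝ}
    (hx : AccPt x (Filter.principal s)) (hf : HasDerivAt f f' x) (hf' : 0 < f')
    (hg : HasDerivAt g g' (f x)) (hmono : MonotoneOn (g ∘ f) s) : 0 ≤ g' :=
  nonneg_of_mul_nonneg_left ((hg.comp x hf).hasDerivWithinAt.nonneg_of_monotoneOn hx hmono) hf'

theorem sum_mul_lt_mul_of_sum_le {X R ι : Type*} [LinearOrder X] [Semiring R] [PartialOrder R]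
    [IsStrictOrderedRing R] [Fintype ι] [Nontrivial ι] {s : Set X} {w φ : X → R} {x : X}
    {y : ι → X} (hx : x ∈ s) (hy : ∀ i, y i ∈ s) (hw : StrictAntiOn w s) (hwx : 0 ≤ w x)
    (hφ : AntitoneOn φ s) (hpos : ∀ i, 0 < φ (y i)) (hle : ∑ i, φ (y i) ≤ φ x) :
    ∑ i, w (y i) * φ (y i) < w x * φ x := by
  have hφ_lt (i : ι) : φ (y i) < φ x := by
    obtain ⟨j, hji⟩ := exists_ne i
    exact (Finset.single_lt_sum hji (Finset.mem_univ i) (Finset.mem_univ j) (hpos j)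
      fun k _ _ => (hpos k).le).trans_le hle
  have hlt (i : ι) : x < y i := hφ.reflect_lt (hy i) hx (hφ_lt i)
  calc
    ∑ i, w (y i) * φ (y i) < ∑ i, w x * φ (y i) :=
      Finset.sum_lt_sum_of_nonempty Finset.univ_nonempty fun i _ =>
        mul_lt_mul_of_pos_right (hw hx (hy i) (hlt i)) (hpos i)
    _ = w x * ∑ i, φ (y i) := (Finset.mul_sum ..).symm
    _ ≤ w x * φ x := mul_le_mul_of_nonneg_left hle hwx

section FirstOrderGap

variable {ι : Type*} [Fintype ι] {φ : ℝ → ℝ} {a : ℝ} {b α : ι → ℝ}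

/-- The gap between the two sides of the first-order condition at the weight `γ` on the common
event. For `φ = σ'` it is the derivative in `γ` of
`a * σ (γ / a) + ∑ i, b i * σ ((α i - γ) / b i)`. -/
noncomputable def firstOrderGap (φ : ℝ → ℝ) (a : ℝ) (b α : ι → ℝ) (γ : ℝ) : ℝ :=
  φ (γ / a) - ∑ i, φ ((α i - γ) / b i)

theorem firstOrderGap_congr {ψ : ℝ → ℝ} {γ : ℝ} (ha : 0 < a) (hb : ∀ i, 0 < b i)
    (hγ : 0 < γ ∧ ∀ i, γ < α i) (hφψ : EqOn φ ψ (Ioi 0)) :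
    firstOrderGap φ a b α γ = firstOrderGap ψ a b α γ :=
  congrArg₂ (· - ·) (hφψ (div_pos hγ.1 ha))
    (Finset.sum_congr rfl fun i _ => hφψ (div_pos (sub_pos.2 (hγ.2 i)) (hb i)))

theorem firstOrderGap_antitoneOn (ha : 0 < a) (hb : ∀ i, 0 < b i) (hφ : AntitoneOn φ (Ioi 0)) :
    AntitoneOn (firstOrderGap φ a b α) {γ | 0 < γ ∧ ∀ i, γ < α i} := by
  intro γ hγ δ hδ hle
  have hcommon : φ (δ / a) ≤ φ (γ / a) :=
    hφ (div_pos hγ.1 ha) (div_pos hδ.1 ha) (div_le_div_of_nonneg_right hle ha.le)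
  have hrest (i : ι) : φ ((α i - γ) / b i) ≤ φ ((α i - δ) / b i) :=
    hφ (div_pos (sub_pos.2 (hδ.2 i)) (hb i)) (div_pos (sub_pos.2 (hγ.2 i)) (hb i))
      (div_le_div_of_nonneg_right (sub_le_sub_left hle _) (hb i).le)
  exact sub_le_sub hcommon (Finset.sum_le_sum fun i _ => hrest i)

theorem firstOrderGap_mul_pos [Nontrivial ι] {w : ℝ → ℝ} {γ : ℝ} (ha : 0 < a)
    (hb : ∀ i, 0 < b i) (hγ : 0 < γ ∧ ∀ i, γ < α i) (hw : StrictAntiOn w (Ioi 0))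
    (hw_nonneg : ∀ x, 0 < x → 0 ≤ w x) (hφ : AntitoneOn φ (Ioi 0))
    (hφ_pos : ∀ x, 0 < x → 0 < φ x) (hgap : 0 ≤ firstOrderGap φ a b α γ) :
    0 < firstOrderGap (w * φ) a b α γ := by
  have hx : 0 < γ / a := div_pos hγ.1 ha
  have hy (i : ι) : 0 < (α i - γ) / b i := div_pos (sub_pos.2 (hγ.2 i)) (hb i)
  exact sub_pos.2 <| sum_mul_lt_mul_of_sum_le hx hy hw (hw_nonneg _ hx) hφ
    (fun i => hφ_pos _ (hy i)) (sub_nonneg.1 hgap)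

end FirstOrderGap

theorem stmt15_general {ι : Type*} [Fintype ι] [Nontrivial ι] {a : ℝ} (ha : 0 < a)
    {b α : ι → ℝ} (hb : ∀ i, 0 < b i) {σ₁ σ₁' : ℝ → ℝ} (hσ₁mono : StrictMonoOn σ₁ (Ioi 0))
    (hσ₁deriv : ∀ x, 0 < x → HasDerivAt σ₁ (σ₁' x) x) (hσ₁'anti : AntitoneOn σ₁' (Ioi 0))
    {h h' : ℝ → ℝ} (hhmono : MonotoneOn h (σ₁ '' Ioi 0))
    (hhderiv : ∀ y ∈ σ₁ '' Ioi 0, HasDerivAt h (h' y) y)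
    (hh'anti : StrictAntiOn h' (σ₁ '' Ioi 0)) {σ₂' : ℝ → ℝ}
    (hσ₂' : ∀ x, 0 < x → σ₂' x = h' (σ₁ x) * σ₁' x) {γ₁ γ₂ : ℝ}
    (hγ₁ : 0 < γ₁ ∧ ∀ i, γ₁ < α i) (hγ₂ : 0 < γ₂ ∧ ∀ i, γ₂ < α i)
    (hfoc1 : σ₁' (γ₁ / a) = ∑ i, σ₁' ((α i - γ₁) / b i))
    (hfoc2 : σ₂' (γ₂ / a) = ∑ i, σ₂' ((α i - γ₂) / b i)) : γ₁ < γ₂ := by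
  have hσ₁'pos (x : ℝ) (hx : 0 < x) : 0 < σ₁' x :=
    pos_of_strictMonoOn_of_antitoneOn ordConnected_Ioi hσ₁mono hσ₁deriv hσ₁'anti hx
      (hx.trans (lt_add_one x)) (lt_add_one x)
  have hmaps : MapsTo σ₁ (Ioi 0) (σ₁ '' Ioi 0) := mapsTo_image σ₁ (Ioi 0)
  have hw_anti : StrictAntiOn (h' ∘ σ₁) (Ioi 0) := hh'anti.comp_strictMonoOn hσ₁mono hmaps
  have hw_nonneg (x : ℝ) (hx : 0 < x) : 0 ≤ h' (σ₁ x) :=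
    outer_hasDerivAt_nonneg_of_monotoneOn_comp (isOpen_Ioi.uniqueDiffWithinAt (𝕜 := ℝ) hx).accPt
      (hσ₁deriv x hx) (hσ₁'pos x hx) (hhderiv _ (hmaps hx)) (hhmono.comp hσ₁mono.monotoneOn hmaps)
  have hgap₂ : firstOrderGap (h' ∘ σ₁ * σ₁') a b α γ₂ = 0 :=
    (firstOrderGap_congr ha hb hγ₂ hσ₂').symm.trans (sub_eq_zero.2 hfoc2)
  by_contra! hle
  have hgap₁ : 0 ≤ firstOrderGap σ₁' a b α γ₂ :=
    (sub_eq_zero.2 hfoc1).ge.trans (firstOrderGap_antitoneOn ha hb hσ₁'anti hγ₂ hγ₁ hle)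
  exact (firstOrderGap_mul_pos ha hb hγ₂ hw_anti hw_nonneg hσ₁'anti hσ₁'pos hgap₁).ne' hgap₂

/-- comparative statics of disagreement: the agent with the more concave
transform `σ² = h ∘ σ¹` puts more weight (`γ² > γ¹`) on the common event. -/
theorem stmt15 (a b c : ℝ) (ha : 0 < a) (hb : 0 < b) (hc : 0 < c)
    (α β : ℝ) (hα : α ∈ Set.Ioo (0 : ℝ) 1) (hβ : β ∈ Set.Ioo (0 : ℝ) 1)
    (σ₁ σ₁' : ℝ → ℝ)
    (hσ₁mono : StrictMonoOn σ₁ (Set.Ioi (0 : ℝ)))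
    (hσ₁deriv : ∀ x : ℝ, 0 < x → HasDerivAt σ₁ (σ₁' x) x)
    (hσ₁'anti : StrictAntiOn σ₁' (Set.Ioi (0 : ℝ)))
    (h h' : ℝ → ℝ)
    (hhmono : StrictMono h)
    (hhderiv : ∀ x : ℝ, HasDerivAt h (h' x) x)
    (hh'anti : StrictAnti h')
    (σ₂ σ₂' : ℝ → ℝ)
    (hσ₂ : ∀ x : ℝ, σ₂ x = h (σ₁ x))
    (hσ₂' : ∀ x : ℝ, 0 < x → σ₂' x = h' (σ₁ x) * σ₁' x)
    (γ₁ γ₂ : ℝ)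
    (hγ₁ : γ₁ ∈ Set.Ioo (0 : ℝ) (min α β)) (hγ₂ : γ₂ ∈ Set.Ioo (0 : ℝ) (min α β))
    (hfoc1 : σ₁' (γ₁ / a) = σ₁' ((α - γ₁) / b) + σ₁' ((β - γ₁) / c))
    (hfoc2 : σ₂' (γ₂ / a) = σ₂' ((α - γ₂) / b) + σ₂' ((β - γ₂) / c)) :
    γ₁ < γ₂ := by
  exact stmt15_general (b := ![b, c]) (α := ![α, β]) ha (by simp [hb, hc]) hσ₁mono hσ₁deriv
    hσ₁'anti.antitoneOn (hhmono.monotone.monotoneOn _) (fun y _ => hhderiv y)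
    (hh'anti.strictAntiOn _) hσ₂' (by simpa using hγ₁) (by simpa using hγ₂)
    (by simpa using hfoc1) (by simpa using hfoc2)
end

section
/- Let S be a finite subset of (0,1) with |S| ≥ 2, let μ and ν be full-support probability distributions on S, let c > 0, and set m := (Σ_{s∈S} s)/|S|. Assume Σ_{s∈S} μ(s)·(s−m)/ν(s) > 0, c > (Σ_{s∈S} μ(s)·((s−m)/ν(s))²) / (2·Σ_{s∈S} μ(s)·(s−m)/ν(s)), and c > max_{s∈S} |s−m|/ν(s). Define π* by π*(s) = ν(s) + (s−m)/(2c). Then: (a) π* is a probability distribution on S with π*(s) > 0 for all s; (b) Σ_{s∈S} μ(s)·ln(π*(s)/ν(s)) > 0; and (c) π* is the unique maximizer of the function π ↦ Σ_{s∈S} s·π(s) − c·Σ_{s∈S} (π(s)−ν(s))² over the set {π : π is a probability distribution on S and Σ_{s∈S} μ(s)·ln(π(s)/ν(s)) ≥ 0}. -/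
open Finset

/-!
The term `π* s / ν s` equals `1 + t s` with `t s = (s - m) / (2 c ν s)`, and the bounds on `c` say
that `t ≥ -1/2` and that `∑ μ t² < ∑ μ t`. The inequality `log (1 + t) ≥ t - t²` on `[-1/2, ∞)`
therefore makes the likelihood constraint slack at `π*`. Since `π*` is the critical point of the
strictly concave quadratic objective under the sole constraint on the total mass (with Lagrange
multiplier `m`), completing the square shows that every other competitor of the same mass loses
exactly `c ∑ (π - π*)²`.
-/

section LogBounds

lemma sub_inv_div_two_le_log {x : ℝ} (hx₀ : 0 < x) (hx₁ : x ≤ 1) :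
    (x - x⁻¹) / 2 ≤ Real.log x := by
  rw [← Real.sinh_log hx₀]
  exact Real.sinh_le_self_iff.2 (Real.log_nonpos hx₀.le hx₁)

lemma sub_sq_le_log_one_add {x : ℝ} (hx : -(1 / 2) ≤ x) : x - x ^ 2 ≤ Real.log (1 + x) := by
  have hx₁ : 0 < 1 + x := by linarith
  rcases le_total 0 x with h₀ | h₀
  · calc x - x ^ 2 ≤ x - x ^ 2 + x ^ 3 / (1 + x) := le_add_of_nonneg_right (by positivity)
      _ = 1 - (1 + x)⁻¹ := by field_simp; ring
      _ ≤ Real.log (1 + x) := Real.one_sub_inv_le_log_of_pos hx₁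
  · have hx₂ : 0 ≤ 1 + 2 * x := by linarith
    calc x - x ^ 2 ≤ x - x ^ 2 + x ^ 2 * (1 + 2 * x) / (2 * (1 + x)) :=
          le_add_of_nonneg_right (by positivity)
      _ = (1 + x - (1 + x)⁻¹) / 2 := by field_simp; ring
      _ ≤ Real.log (1 + x) := sub_inv_div_two_le_log hx₁ (by linarith)

end LogBounds

lemma neg_half_le_div_div_two_mul {a b c : ℝ} (hb : 0 < b) (hc : 0 < c) (h : -a ≤ c * b) :
    -(1 / 2) ≤ a / b / (2 * c) := by
  rw [div_div, le_div_iff₀ (by positivity)]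
  linarith

section WeightedSums

variable {ι : Type*} {S : Finset ι} {μ x : ι → ℝ} {c : ℝ}

lemma sum_mul_log_one_add_pos (hμ : ∀ s ∈ S, 0 ≤ μ s) (hx : ∀ s ∈ S, -(1 / 2) ≤ x s)
    (hlt : ∑ s ∈ S, μ s * x s ^ 2 < ∑ s ∈ S, μ s * x s) :
    0 < ∑ s ∈ S, μ s * Real.log (1 + x s) :=
  calc 0 < ∑ s ∈ S, μ s * x s - ∑ s ∈ S, μ s * x s ^ 2 := sub_pos.2 hlt
    _ = ∑ s ∈ S, μ s * (x s - x s ^ 2) := by simp only [mul_sub, sum_sub_distrib]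
    _ ≤ ∑ s ∈ S, μ s * Real.log (1 + x s) := sum_le_sum fun s hs ↦
        mul_le_mul_of_nonneg_left (sub_sq_le_log_one_add (hx s hs)) (hμ s hs)

lemma sum_mul_div_sq_lt_sum_mul_div (hc : 0 < c) (hpos : 0 < ∑ s ∈ S, μ s * x s)
    (hlt : (∑ s ∈ S, μ s * x s ^ 2) / (2 * ∑ s ∈ S, μ s * x s) < c) :
    ∑ s ∈ S, μ s * (x s / (2 * c)) ^ 2 < ∑ s ∈ S, μ s * (x s / (2 * c)) := by
  have hlt' : ∑ s ∈ S, μ s * x s ^ 2 < (∑ s ∈ S, μ s * x s) * (2 * c) := by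
    rw [div_lt_iff₀ (by positivity)] at hlt
    linarith
  simp only [div_pow, ← mul_div_assoc, ← sum_div]
  rw [div_lt_div_iff₀ (by positivity) (by positivity), sq (2 * c), ← mul_assoc (∑ s ∈ S, μ s * x s)]
  exact mul_lt_mul_of_pos_right hlt' (by positivity)

end WeightedSums

section Narrative

variable {ι : Type*} {S : Finset ι} {u μ ν π : ι → ℝ} {m c : ℝ} {s : ι}

/-- The equilibrium narrative `π*` for the payoff `u` and the reference weights `ν`: the candidate
maximizer of the sender's objective. The multiplier `m` of the mass constraint is kept as a
parameter; it has to be the mean of `u` for `π*` to have the total mass of `ν`. -/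
noncomputable def equilibriumNarrative (u ν : ι → ℝ) (m c : ℝ) (s : ι) : ℝ :=
  ν s + (u s - m) / (2 * c)

/-- The sender's objective, to be maximized over narratives `π`: the expected payoff minus `c` times
the squared distance to `ν`. It is defined for all weights `π`, normalized or not. -/
def senderObjective (S : Finset ι) (u ν : ι → ℝ) (c : ℝ) (π : ι → ℝ) : ℝ :=
  (∑ s ∈ S, u s * π s) - c * ∑ s ∈ S, (π s - ν s) ^ 2

lemma equilibriumNarrative_div (hν : ν s ≠ 0) :
    equilibriumNarrative u ν m c s / ν s = 1 + (u s - m) / ν s / (2 * c) := by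
  rw [equilibriumNarrative, add_div, div_self hν, div_right_comm]

lemma equilibriumNarrative_pos (hc : 0 < c) (hν : 0 < ν s) (hs : m - u s ≤ c * ν s) :
    0 < equilibriumNarrative u ν m c s := by
  rw [← div_pos_iff_of_pos_right hν, equilibriumNarrative_div hν.ne']
  have hshift := neg_half_le_div_div_two_mul hν hc (by rwa [neg_sub] : -(u s - m) ≤ c * ν s)
  linarith

lemma sum_equilibriumNarrative (hm : m = (∑ s ∈ S, u s) / #S) :
    ∑ s ∈ S, equilibriumNarrative u ν m c s = ∑ s ∈ S, ν s := by
  have hcentred : ∑ s ∈ S, (u s - m) = 0 := by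
    rw [sum_sub_distrib, sum_const, hm, ← expect_eq_sum_div_card, card_smul_expect, sub_self]
  simp only [equilibriumNarrative, sum_add_distrib, ← sum_div, hcentred, zero_div, add_zero]

lemma sum_mul_log_equilibriumNarrative_div_pos (hc : 0 < c) (hμ : ∀ s ∈ S, 0 ≤ μ s)
    (hν : ∀ s ∈ S, 0 < ν s) (hpos : 0 < ∑ s ∈ S, μ s * ((u s - m) / ν s))
    (hlt : (∑ s ∈ S, μ s * ((u s - m) / ν s) ^ 2) / (2 * ∑ s ∈ S, μ s * ((u s - m) / ν s)) < c)
    (hle : ∀ s ∈ S, m - u s ≤ c * ν s) :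
    0 < ∑ s ∈ S, μ s * Real.log (equilibriumNarrative u ν m c s / ν s) := by
  rw [sum_congr rfl fun s hs ↦ by rw [equilibriumNarrative_div (hν s hs).ne']]
  have hshift (s : ι) (hs : s ∈ S) : -(1 / 2) ≤ (u s - m) / ν s / (2 * c) :=
    neg_half_le_div_div_two_mul (hν s hs) hc (by rw [neg_sub]; exact hle s hs)
  exact sum_mul_log_one_add_pos hμ hshift (sum_mul_div_sq_lt_sum_mul_div hc hpos hlt)

lemma senderObjective_equilibriumNarrative_sub (hc : c ≠ 0)
    (hπ : ∑ s ∈ S, π s = ∑ s ∈ S, equilibriumNarrative u ν m c s) :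
    senderObjective S u ν c (equilibriumNarrative u ν m c) - senderObjective S u ν c π =
      c * ∑ s ∈ S, (π s - equilibriumNarrative u ν m c s) ^ 2 := by
  have hsquare : senderObjective S u ν c (equilibriumNarrative u ν m c) -
      senderObjective S u ν c π = c * ∑ s ∈ S, (π s - equilibriumNarrative u ν m c s) ^ 2 -
        m * (∑ s ∈ S, π s - ∑ s ∈ S, equilibriumNarrative u ν m c s) := by
    simp only [senderObjective, mul_sum, ← sum_sub_distrib]
    refine sum_congr rfl fun s _ ↦ ?_
    rw [equilibriumNarrative]
    field_simp
    ring
  rw [hsquare, hπ, sub_self, mul_zero, sub_zero]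

lemma senderObjective_lt_equilibriumNarrative (hc : 0 < c)
    (hπ : ∑ s ∈ S, π s = ∑ s ∈ S, equilibriumNarrative u ν m c s)
    (hne : ∃ s ∈ S, π s ≠ equilibriumNarrative u ν m c s) :
    senderObjective S u ν c π < senderObjective S u ν c (equilibriumNarrative u ν m c) := by
  obtain ⟨s, hs, hs_ne⟩ := hne
  rw [← sub_pos, senderObjective_equilibriumNarrative_sub hc.ne' hπ]
  exact mul_pos hc <| sum_pos' (fun _ _ ↦ sq_nonneg _)
    ⟨s, hs, sq_pos_of_ne_zero (sub_ne_zero.2 hs_ne)⟩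

end Narrative

theorem stmt16_general {ι : Type*} {S : Finset ι} {u μ ν : ι → ℝ} {m c : ℝ}
    (hμ : ∀ s ∈ S, 0 ≤ μ s) (hν : ∀ s ∈ S, 0 < ν s) (hm : m = (∑ s ∈ S, u s) / #S)
    (hpos : 0 < ∑ s ∈ S, μ s * ((u s - m) / ν s))
    (hlt : (∑ s ∈ S, μ s * ((u s - m) / ν s) ^ 2) / (2 * ∑ s ∈ S, μ s * ((u s - m) / ν s)) < c)
    (hle : ∀ s ∈ S, m - u s ≤ c * ν s) :
    ((∀ s ∈ S, 0 < equilibriumNarrative u ν m c s) ∧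
      ∑ s ∈ S, equilibriumNarrative u ν m c s = ∑ s ∈ S, ν s) ∧
    0 < ∑ s ∈ S, μ s * Real.log (equilibriumNarrative u ν m c s / ν s) ∧
    ∀ π : ι → ℝ, ∑ s ∈ S, π s = ∑ s ∈ S, ν s →
      (∃ s ∈ S, π s ≠ equilibriumNarrative u ν m c s) →
      senderObjective S u ν c π < senderObjective S u ν c (equilibriumNarrative u ν m c) := by
  have hc : 0 < c := lt_of_le_of_lt (div_nonneg
    (sum_nonneg fun s hs ↦ mul_nonneg (hμ s hs) (sq_nonneg _)) (by positivity)) hlt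
  have hmass : ∑ s ∈ S, equilibriumNarrative u ν m c s = ∑ s ∈ S, ν s :=
    sum_equilibriumNarrative hm
  exact ⟨⟨fun s hs ↦ equilibriumNarrative_pos hc (hν s hs) (hle s hs), hmass⟩,
    sum_mul_log_equilibriumNarrative_div_pos hc hμ hν hpos hlt hle,
    fun _ hπ ↦ senderObjective_lt_equilibriumNarrative hc (hπ.trans hmass.symm)⟩

/-- the equilibrium narrative `π*(s) = ν(s) + (s−m)/(2c)` is a full-support
probability distribution, lies strictly inside the KL constraint, and is the unique
maximizer of the sender's objective over the constrained set. -/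
theorem stmt16 (S : Finset ℝ) (hScard : 2 ≤ S.card)
    (hS : ∀ s ∈ S, s ∈ Set.Ioo (0 : ℝ) 1)
    (μ ν : ℝ → ℝ)
    (hμpos : ∀ s ∈ S, 0 < μ s) (hμsum : ∑ s ∈ S, μ s = 1)
    (hνpos : ∀ s ∈ S, 0 < ν s) (hνsum : ∑ s ∈ S, ν s = 1)
    (c : ℝ) (hc : 0 < c)
    (m : ℝ) (hm : m = (∑ s ∈ S, s) / S.card)
    (hpos : 0 < ∑ s ∈ S, μ s * ((s - m) / ν s))
    (hc1 : (∑ s ∈ S, μ s * ((s - m) / ν s) ^ 2) /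
      (2 * ∑ s ∈ S, μ s * ((s - m) / ν s)) < c)
    (hc2 : ∀ s ∈ S, |s - m| / ν s < c)
    (πstar : ℝ → ℝ) (hπstar : ∀ s, πstar s = ν s + (s - m) / (2 * c)) :
    ((∀ s ∈ S, 0 < πstar s) ∧ ∑ s ∈ S, πstar s = 1) ∧
    (0 < ∑ s ∈ S, μ s * Real.log (πstar s / ν s)) ∧
    (∀ π : ℝ → ℝ, (∀ s ∈ S, 0 ≤ π s) → (∑ s ∈ S, π s = 1) →
      0 ≤ (∑ s ∈ S, μ s * Real.log (π s / ν s)) →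
      (∃ s ∈ S, π s ≠ πstar s) →
      (∑ s ∈ S, s * π s) - c * ∑ s ∈ S, (π s - ν s) ^ 2 <
        (∑ s ∈ S, s * πstar s) - c * ∑ s ∈ S, (πstar s - ν s) ^ 2) := by
  obtain rfl : πstar = equilibriumNarrative (fun s ↦ s) ν m c := funext hπstar
  obtain ⟨⟨hstar_pos, hmass⟩, hslack, hmax⟩ :=
    stmt16_general (u := fun s ↦ s) (fun s hs ↦ (hμpos s hs).le) hνpos hm hpos hc1 fun s hs ↦ by
      linarith [neg_abs_le (s - m), (div_lt_iff₀ (hνpos s hs)).1 (hc2 s hs)]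
  exact ⟨⟨hstar_pos, hmass.trans hνsum⟩, hslack,
    fun π _ hπ _ hne ↦ hmax π (hπ.trans hνsum.symm) hne⟩
end
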